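/- arXiv:1206.1892 — 6 statements merged into one kernel-verified Lean document; each statement's English description precedes it below -/
import Mathlib

section
/- Let I(L) ⊂ S be a graded lattice ideal of dimension 1 (equivalently, L ⊂ Z^s is a homogeneous lattice of rank s−1). Then the degree of S/I(L) equals the order of the torsion subgroup T(Z^s/L) of Z^s/L. -/
open MvPolynomial

/-- The binomial `t^{a⁺} - t^{a⁻}` associated to an integer vector `a ∈ ℤ^s`,
where `a⁺` and `a⁻` are the positive and negative parts of `a`. -/
noncomputable def latticeBinomial (K : Type*) [Field K] {s : ℕ} (a : Fin s → ℤ) :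
    MvPolynomial (Fin s) K :=
  (∏ i, X i ^ (a i).toNat) - ∏ i, X i ^ (-(a i)).toNat

/-- The lattice ideal `I(L) = ({t^{a⁺} - t^{a⁻} : a ∈ L})` of a lattice `L ⊆ ℤ^s`. -/
noncomputable def latticeIdeal (K : Type*) [Field K] {s : ℕ} (L : AddSubgroup (Fin s → ℤ)) :
    Ideal (MvPolynomial (Fin s) K) :=
  Ideal.span {f | ∃ a ∈ L, f = latticeBinomial K a}

/-- The Hilbert function `H_I(d) = dim_K S_d / I_d` of `S/I`, where `S_d` is the space of
homogeneous polynomials of degree `d` (together with `0`) and `I_d = I ∩ S_d`. -/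
noncomputable def hilbertFunction {K : Type*} [Field K] {s : ℕ}
    (I : Ideal (MvPolynomial (Fin s) K)) (d : ℕ) : ℕ :=
  Module.finrank K
    (↥(homogeneousSubmodule (Fin s) K d) ⧸
      (Submodule.comap (homogeneousSubmodule (Fin s) K d).subtype (Submodule.restrictScalars K I)))


/-- The monomial map `ℕ^s → ℤ^s / L`. -/
noncomputable def latPhi {s : ℕ} (L : AddSubgroup (Fin s → ℤ)) :
    (Fin s →₀ ℕ) →+ ((Fin s → ℤ) ⧸ L) where
  toFun m := QuotientAddGroup.mk (fun i => (m i : ℤ))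
  map_zero' := by
    rw [← QuotientAddGroup.mk_zero]; congr 1
  map_add' m n := by
    rw [← QuotientAddGroup.mk_add]
    exact congrArg _ (by ext i; simp)

theorem latPhi_eq_iff {s : ℕ} (L : AddSubgroup (Fin s → ℤ)) (m n : Fin s →₀ ℕ) :
    latPhi L m = latPhi L n ↔ (fun i => (m i : ℤ) - n i) ∈ L := by
  change QuotientAddGroup.mk _ = QuotientAddGroup.mk _ ↔ _
  rw [eq_comm, QuotientAddGroup.eq]
  have : (-(fun i => (n i : ℤ)) + fun i => (m i : ℤ)) = (fun i => (m i : ℤ) - n i) := by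
    ext i; simp; ring
  rw [this]

/-- The algebra map `K[t] → K[ℤ^s / L]`. -/
noncomputable def latF (K : Type*) [Field K] {s : ℕ} (L : AddSubgroup (Fin s → ℤ)) :
    MvPolynomial (Fin s) K →ₐ[K] AddMonoidAlgebra K ((Fin s → ℤ) ⧸ L) :=
  AddMonoidAlgebra.mapDomainAlgHom K K (latPhi L)

theorem latF_monomial (K : Type*) [Field K] {s : ℕ} (L : AddSubgroup (Fin s → ℤ))
    (m : Fin s →₀ ℕ) (c : K) :
    latF K L (monomial m c) = AddMonoidAlgebra.single (latPhi L m) c := by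
  exact AddMonoidAlgebra.mapDomain_single

theorem prod_X_pow_eq (K : Type*) [Field K] {s : ℕ} (u : Fin s → ℕ) :
    (∏ i, X i ^ u i : MvPolynomial (Fin s) K) = monomial (Finsupp.equivFunOnFinite.symm u) 1 := by
  rw [monomial_eq]
  simp [Finsupp.prod_fintype]

theorem latticeIdeal_le_ker (K : Type*) [Field K] {s : ℕ} (L : AddSubgroup (Fin s → ℤ)) :
    latticeIdeal K L ≤ RingHom.ker (latF K L) := by
  unfold latticeIdeal
  rw [Ideal.span_le]
  rintro f ⟨a, ha, rfl⟩
  simp only [SetLike.mem_coe, RingHom.mem_ker, latticeBinomial]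
  rw [prod_X_pow_eq, prod_X_pow_eq, map_sub, latF_monomial, latF_monomial, sub_eq_zero]
  congr 1
  rw [latPhi_eq_iff]
  convert ha using 1
  ext i
  simp

theorem monomial_sub_mem (K : Type*) [Field K] {s : ℕ} (L : AddSubgroup (Fin s → ℤ))
    (m n : Fin s →₀ ℕ) (h : latPhi L m = latPhi L n) :
    (monomial m 1 - monomial n 1 : MvPolynomial (Fin s) K) ∈ latticeIdeal K L := by
  rw [latPhi_eq_iff] at h
  have key : (monomial m 1 - monomial n 1 : MvPolynomial (Fin s) K) =
      monomial (m ⊓ n) 1 * latticeBinomial K (fun i => (m i : ℤ) - n i) := by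
    rw [latticeBinomial, prod_X_pow_eq, prod_X_pow_eq, mul_sub, monomial_mul, monomial_mul]
    have e1 : (m ⊓ n) + Finsupp.equivFunOnFinite.symm (fun i => ((m i : ℤ) - n i).toNat) = m := by
      ext i; simp; omega
    have e2 : (m ⊓ n) + Finsupp.equivFunOnFinite.symm (fun i => (-((m i : ℤ) - n i)).toNat) = n := by
      ext i; simp; omega
    rw [e1, e2, one_mul]
  rw [key]
  exact Ideal.mul_mem_left _ _ (Ideal.subset_span ⟨_, h, rfl⟩)

theorem ker_le_latticeIdeal (K : Type*) [Field K] {s : ℕ} (L : AddSubgroup (Fin s → ℤ))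
    (p : MvPolynomial (Fin s) K) (hp : latF K L p = 0) : p ∈ latticeIdeal K L := by
  let r : ((Fin s → ℤ) ⧸ L) → (Fin s →₀ ℕ) := Function.invFun (latPhi L)
  let q : MvPolynomial (Fin s) K →ₗ[K] (MvPolynomial (Fin s) K ⧸ latticeIdeal K L) :=
    (Ideal.Quotient.mkₐ K (latticeIdeal K L)).toLinearMap
  let g : MvPolynomial (Fin s) K →ₗ[K] MvPolynomial (Fin s) K :=
    (basisMonomials (Fin s) K).constr K (fun m => monomial (r (latPhi L m)) 1)
  let G : AddMonoidAlgebra K ((Fin s → ℤ) ⧸ L) →ₗ[K] MvPolynomial (Fin s) K :=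
    (Finsupp.linearCombination K (fun x => (monomial (r x) 1 : MvPolynomial (Fin s) K))).comp
      (AddMonoidAlgebra.coeffLinearEquiv K).toLinearMap
  have hq : q ∘ₗ G ∘ₗ (latF K L).toLinearMap = q := by
    apply (basisMonomials (Fin s) K).ext
    intro m
    have h1 : G (latF K L (monomial m 1)) = monomial (r (latPhi L m)) 1 := by
      rw [latF_monomial]
      simp [G]
    simp only [coe_basisMonomials, LinearMap.comp_apply, AlgHom.toLinearMap_apply, h1, q]
    apply Ideal.Quotient.eq.2
    apply monomial_sub_mem
    exact Function.invFun_eq ⟨m, rfl⟩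
  have h2 : q p = 0 := by
    rw [← hq]
    simp [hp]
  exact Ideal.Quotient.eq_zero_iff_mem.1 h2

theorem hilbert_eq (K : Type*) [Field K] {s : ℕ} (L : AddSubgroup (Fin s → ℤ)) (d : ℕ) :
    hilbertFunction (latticeIdeal K L) d =
      Nat.card (latPhi L '' {m | m.degree = d} : Set ((Fin s → ℤ) ⧸ L)) := by
  unfold hilbertFunction
  have hk : Submodule.comap (homogeneousSubmodule (Fin s) K d).subtype
      (Submodule.restrictScalars K (latticeIdeal K L)) =
      LinearMap.ker ((latF K L).toLinearMap ∘ₗ (homogeneousSubmodule (Fin s) K d).subtype) := by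
    ext x
    simp only [Submodule.mem_comap, Submodule.restrictScalars_mem, LinearMap.mem_ker,
      LinearMap.comp_apply, AlgHom.toLinearMap_apply]
    exact ⟨fun h => latticeIdeal_le_ker K L h, fun h => ker_le_latticeIdeal K L _ h⟩
  rw [hk, (LinearMap.quotKerEquivRange _).finrank_eq, LinearMap.range_comp, Submodule.range_subtype,
    homogeneousSubmodule_eq_finsupp_supported, AddMonoidAlgebra.supported_eq_span_single,
    Submodule.map_span, Set.image_image]
  have : (fun x => (latF K L).toLinearMap (AddMonoidAlgebra.single x 1)) ''
      {m : Fin s →₀ ℕ | m.degree = d} = (fun x => AddMonoidAlgebra.single x (1:K)) ''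
      (latPhi L '' {m | m.degree = d}) := by
    rw [Set.image_image]
    apply Set.image_congr
    intro m _
    exact latF_monomial K L m 1
  rw [this, ← AddMonoidAlgebra.supported_eq_span_single,
    (AddMonoidAlgebra.supportedEquivFinsupp _).finrank_eq]
  have : Finite {m : Fin s →₀ ℕ | m.degree = d} :=
    Finset.finite_toSet (Finset.finsuppAntidiag Finset.univ d) |>.subset (by
      intro m hm
      simp at hm ⊢
      rw [← hm, Finsupp.degree_eq_sum])
  have : Fintype (latPhi L '' {m | m.degree = d} : Set ((Fin s → ℤ) ⧸ L)) := Fintype.ofFinite _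
  rw [Module.finrank_finsupp_self, Nat.card_eq_fintype_card]

/-- The degree map on `ℤ^s / L`. -/
noncomputable def latDeg {s : ℕ} (L : AddSubgroup (Fin s → ℤ)) (hhom : ∀ a ∈ L, ∑ i, a i = 0) :
    ((Fin s → ℤ) ⧸ L) →+ ℤ :=
  QuotientAddGroup.lift L
    { toFun := fun a => ∑ i, a i
      map_zero' := by simp
      map_add' := fun a b => by simp [Finset.sum_add_distrib] } (fun a ha => hhom a ha)

theorem latDeg_mk {s : ℕ} (L : AddSubgroup (Fin s → ℤ)) (hhom : ∀ a ∈ L, ∑ i, a i = 0)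
    (a : Fin s → ℤ) : latDeg L hhom (QuotientAddGroup.mk a) = ∑ i, a i := rfl

theorem exists_smul_eq_zero {s : ℕ} (hs : 0 < s) (L : AddSubgroup (Fin s → ℤ))
    (hhom : ∀ a ∈ L, ∑ i, a i = 0) (hrank : Module.finrank ℤ L = s - 1)
    (x : (Fin s → ℤ) ⧸ L) (hx : latDeg L hhom x = 0) : ∃ n : ℕ, 0 < n ∧ n • x = 0 := by
  let N : Submodule ℤ (Fin s → ℤ) := AddSubgroup.toIntSubmodule L
  let D : (Fin s → ℤ) ⧸ N →ₗ[ℤ] ℤ := (latDeg L hhom).toIntLinearMap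
  have h1 := N.finrank_quotient_add_finrank
  have h2 : Module.finrank ℤ N = s - 1 := hrank
  rw [h2, Module.finrank_fin_fun] at h1
  have h3 := (LinearMap.ker D).finrank_quotient_add_finrank
  have hsurj : Function.Surjective D := by
    intro z
    refine ⟨QuotientAddGroup.mk (Pi.single ⟨0, hs⟩ z), ?_⟩
    change latDeg L hhom (QuotientAddGroup.mk (Pi.single ⟨0, hs⟩ z)) = z
    rw [latDeg_mk]
    simp
  rw [(D.quotKerEquivOfSurjective hsurj).finrank_eq, Module.finrank_self] at h3
  have h4 : Module.finrank ℤ (LinearMap.ker D) = 0 := by omega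
  rw [Module.finrank_eq_zero_iff] at h4
  obtain ⟨a, ha, h⟩ := h4 ⟨x, hx⟩
  have h' : a • x = 0 := congrArg Subtype.val h
  refine ⟨a.natAbs, Int.natAbs_pos.2 ha, ?_⟩
  rcases Int.natAbs_eq a with e | e
  · rw [e] at h'; exact_mod_cast h'
  · rw [e, neg_smul, neg_eq_zero] at h'; exact_mod_cast h'

theorem mem_torsion_iff {s : ℕ} (hs : 0 < s) (L : AddSubgroup (Fin s → ℤ))
    (hhom : ∀ a ∈ L, ∑ i, a i = 0) (hrank : Module.finrank ℤ L = s - 1)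
    (x : (Fin s → ℤ) ⧸ L) :
    x ∈ AddCommGroup.torsion ((Fin s → ℤ) ⧸ L) ↔ latDeg L hhom x = 0 := by
  rw [AddCommGroup.mem_torsion, isOfFinAddOrder_iff_nsmul_eq_zero]
  constructor
  · rintro ⟨n, hn, h⟩
    have := congrArg (latDeg L hhom) h
    simp at this
    omega
  · exact exists_smul_eq_zero hs L hhom hrank x

theorem finite_torsion' {s : ℕ} (L : AddSubgroup (Fin s → ℤ)) :
    Finite (AddCommGroup.torsion ((Fin s → ℤ) ⧸ L)) := by
  let N : Submodule ℤ (Fin s → ℤ) := AddSubgroup.toIntSubmodule L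
  let T : Submodule ℤ ((Fin s → ℤ) ⧸ N) :=
    AddSubgroup.toIntSubmodule (AddCommGroup.torsion ((Fin s → ℤ) ⧸ L))
  have : Finite T := by
    apply Module.finite_of_fg_torsion
    rintro ⟨x, hx⟩
    obtain ⟨n, hn, h⟩ := isOfFinAddOrder_iff_nsmul_eq_zero.1 hx
    refine ⟨⟨(n : ℤ), mem_nonZeroDivisors_of_ne_zero (by omega)⟩, ?_⟩
    apply Subtype.ext
    change ((n : ℤ)) • x = 0
    rw [natCast_zsmul]; exact h
  exact this

/-- Every torsion class, shifted by a large degree in the first variable, is hit by a monomial. -/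
theorem exists_bound {s : ℕ} (hs : 0 < s) (L : AddSubgroup (Fin s → ℤ))
    (hhom : ∀ a ∈ L, ∑ i, a i = 0) (hrank : Module.finrank ℤ L = s - 1)
    (x : (Fin s → ℤ) ⧸ L) (hx : latDeg L hhom x = 0) :
    ∃ B : ℕ, ∀ d ≥ B, ∃ m : Fin s →₀ ℕ, m.degree = d ∧
      latPhi L m = x + QuotientAddGroup.mk (Pi.single ⟨0, hs⟩ (d : ℤ)) := by
  obtain ⟨v, rfl⟩ := QuotientAddGroup.mk_surjective x
  rw [latDeg_mk] at hx
  set o : Fin s := ⟨0, hs⟩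
  have hn : ∀ i : Fin s, ∃ n : ℕ, 0 < n ∧ n • (Pi.single i (1:ℤ) - Pi.single o 1) ∈ L := by
    intro i
    obtain ⟨n, hn, h⟩ := exists_smul_eq_zero hs L hhom hrank
      (QuotientAddGroup.mk (Pi.single i (1:ℤ) - Pi.single o 1)) (by rw [latDeg_mk]; simp)
    refine ⟨n, hn, ?_⟩
    rw [← QuotientAddGroup.mk_nsmul, QuotientAddGroup.eq_zero_iff] at h
    exact h
  choose n hn0 hnL using hn
  let l : Fin s → ℤ :=
    ∑ i, (v i).natAbs • n i • (Pi.single i (1:ℤ) - Pi.single o 1)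
  have hl : l ∈ L := sum_mem fun i _ => nsmul_mem (hnL i) _
  have hw : ∀ j, j ≠ o → 0 ≤ (v + l) j := by
    intro j hj
    have : l j = (v j).natAbs * n j := by
      simp [l, Finset.sum_apply, Pi.single_apply, hj]
    rw [Pi.add_apply, this]
    have h1 : (1:ℤ) ≤ n j := by exact_mod_cast hn0 j
    have h2 : ((v j).natAbs : ℤ) ≤ (v j).natAbs * n j := le_mul_of_one_le_right (by positivity) h1
    omega
  have hsum : ∑ i, (v + l) i = 0 := by
    simp only [Pi.add_apply, Finset.sum_add_distrib]
    rw [hx, hhom l hl, add_zero]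
  refine ⟨((v + l) o).natAbs, fun d hd => ?_⟩
  have hnn : ∀ j, 0 ≤ ((v + l) + Pi.single o (d : ℤ) : Fin s → ℤ) j := by
    intro j
    by_cases hj : j = o
    · subst hj
      rw [Pi.add_apply, Pi.single_eq_same]; omega
    · rw [Pi.add_apply, Pi.single_eq_of_ne hj, add_zero]; exact hw j hj
  refine ⟨Finsupp.equivFunOnFinite.symm
    fun j => (((v + l) + Pi.single o (d : ℤ) : Fin s → ℤ) j).toNat, ?_, ?_⟩
  · rw [Finsupp.degree_eq_sum]
    zify
    simp only [Finsupp.equivFunOnFinite_symm_apply_apply]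
    rw [Finset.sum_congr rfl fun j _ => Int.toNat_of_nonneg (hnn j)]
    rw [Finset.sum_congr rfl fun j _ => Pi.add_apply (v + l) (Pi.single o (d : ℤ)) j,
      Finset.sum_add_distrib, hsum]
    simp
  · change QuotientAddGroup.mk _ = _
    rw [← QuotientAddGroup.mk_add, eq_comm, QuotientAddGroup.eq]
    convert hl using 1
    ext j
    simp only [Pi.add_apply, Pi.neg_apply, Finsupp.equivFunOnFinite_symm_apply_apply] at hnn ⊢
    rw [Int.toNat_of_nonneg (hnn j)]
    ring

theorem degree_latticeIdeal_eq_card_torsion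
    (K : Type*) [Field K] {s : ℕ} (hs : 0 < s) (L : AddSubgroup (Fin s → ℤ))
    (hhom : ∀ a ∈ L, ∑ i, a i = 0)
    (hrank : Module.finrank ℤ L = s - 1) :
    ∃ N : ℕ, ∀ d ≥ N, hilbertFunction (latticeIdeal K L) d =
      Nat.card (AddCommGroup.torsion ((Fin s → ℤ) ⧸ L)) := by
  have := finite_torsion' L
  have := Fintype.ofFinite (AddCommGroup.torsion ((Fin s → ℤ) ⧸ L))
  choose B hB using fun x : AddCommGroup.torsion ((Fin s → ℤ) ⧸ L) =>
    exists_bound hs L hhom hrank x.1 ((mem_torsion_iff hs L hhom hrank _).1 x.2)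
  refine ⟨∑ x, B x, fun d hd => ?_⟩
  rw [hilbert_eq]
  let e : (Fin s → ℤ) ⧸ L := QuotientAddGroup.mk (Pi.single ⟨0, hs⟩ (d : ℤ))
  have himg : latPhi L '' {m | m.degree = d} =
      (fun x => x + e) '' (AddCommGroup.torsion ((Fin s → ℤ) ⧸ L) : Set ((Fin s → ℤ) ⧸ L)) := by
    ext y
    constructor
    · rintro ⟨m, hm, rfl⟩
      refine ⟨latPhi L m - e, ?_, sub_add_cancel _ _⟩
      rw [SetLike.mem_coe, mem_torsion_iff hs L hhom hrank, map_sub, sub_eq_zero]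
      change latDeg L hhom (QuotientAddGroup.mk _) = latDeg L hhom (QuotientAddGroup.mk _)
      rw [latDeg_mk, latDeg_mk]
      have hm' : m.degree = d := hm
      rw [← hm', Finsupp.degree_eq_sum]
      simp
    · rintro ⟨x, hx, rfl⟩
      obtain ⟨m, hm, h⟩ := hB ⟨x, hx⟩ d
        (le_trans (Finset.single_le_sum (fun _ _ => Nat.zero_le _) (Finset.mem_univ _)) hd)
      exact ⟨m, hm, h⟩
  rw [himg]
  exact Nat.card_image_of_injective (add_left_injective e) _
end

section
/- Let L ⊂ S be a graded lattice ideal of dimension 1 generated by the binomials t^{α_1⁺} − t^{α_1⁻}, …, t^{α_m⁺} − t^{α_m⁻}. Then deg S/L = d_1 ⋯ d_{s−1}, where d_1,…,d_{s−1} are the invariant factors of the integral matrix A whose rows are α_1,…,α_m. -/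
open MvPolynomial

namespace LatticeAux

variable {K : Type*} [Field K] {s : ℕ}

/-- Integer vector of an exponent. -/
def toZ (u : Fin s →₀ ℕ) : Fin s → ℤ := fun i => (u i : ℤ)

/-- The algebra map to the group algebra of the quotient. -/
noncomputable def phi (K : Type*) [Field K] (L : AddSubgroup (Fin s → ℤ)) :
    MvPolynomial (Fin s) K →ₐ[K] AddMonoidAlgebra K ((Fin s → ℤ) ⧸ L) :=
  aeval (fun i => AddMonoidAlgebra.of K ((Fin s → ℤ) ⧸ L)
    (Multiplicative.ofAdd (QuotientAddGroup.mk (Pi.single i (1 : ℤ)))))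

lemma prod_mk (L : AddSubgroup (Fin s → ℤ)) (u : Fin s → ℕ) :
    ∏ i, (Multiplicative.ofAdd (QuotientAddGroup.mk (s := L) (Pi.single i (1 : ℤ)))) ^ (u i)
     = Multiplicative.ofAdd (QuotientAddGroup.mk (s := L) (fun i => (u i : ℤ))) := by
  have h : (fun i => (u i : ℤ)) = ∑ i, (u i) • (Pi.single i (1 : ℤ) : Fin s → ℤ) := by
    ext j
    simp [Finset.sum_apply, Pi.single_apply]
  rw [h, ← QuotientAddGroup.mk'_apply, map_sum, ofAdd_sum]
  refine Finset.prod_congr rfl fun i _ => ?_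
  rw [map_nsmul, ofAdd_nsmul]; rfl

lemma phi_prod (L : AddSubgroup (Fin s → ℤ)) (u : Fin s → ℕ) :
    phi K L (∏ i, X i ^ u i) =
      AddMonoidAlgebra.single (QuotientAddGroup.mk (fun i => (u i : ℤ))) 1 := by
  rw [map_prod]
  simp only [phi, map_pow, aeval_X]
  have h : AddMonoidAlgebra.of K ((Fin s → ℤ) ⧸ L)
      (Multiplicative.ofAdd (QuotientAddGroup.mk (s := L) (fun i => (u i : ℤ)))) =
      AddMonoidAlgebra.single (QuotientAddGroup.mk (fun i => (u i : ℤ))) 1 := rfl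
  rw [← h, ← prod_mk, map_prod]
  simp only [map_pow]

lemma monomial_eq_prod (u : Fin s →₀ ℕ) (c : K) :
    monomial u c = C c * ∏ i, X i ^ u i := by
  rw [monomial_eq, Finsupp.prod_fintype]
  simp

lemma phi_monomial (L : AddSubgroup (Fin s → ℤ)) (u : Fin s →₀ ℕ) (c : K) :
    phi K L (monomial u c) = AddMonoidAlgebra.single (QuotientAddGroup.mk (toZ u)) c := by
  rw [monomial_eq_prod, ← smul_eq_C_mul, map_smul, phi_prod]
  simp
  rfl

lemma phi_binomial_eq_zero_iff (L : AddSubgroup (Fin s → ℤ)) (a : Fin s → ℤ) :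
    phi K L (latticeBinomial K a) = 0 ↔ a ∈ L := by
  have h : -(fun i => (((-(a i)).toNat : ℕ) : ℤ)) + (fun i => (((a i).toNat : ℕ) : ℤ)) = a := by
    ext i
    simp only [Pi.add_apply, Pi.neg_apply]
    omega
  rw [latticeBinomial, map_sub, phi_prod, phi_prod, sub_eq_zero]
  constructor
  · intro h1
    have h2 := (AddMonoidAlgebra.single_left_inj (one_ne_zero (α := K))).1 h1
    rw [eq_comm, QuotientAddGroup.eq] at h2
    rwa [h] at h2
  · intro h1
    congr 1
    rw [eq_comm, QuotientAddGroup.eq, h]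
    exact h1

lemma latticeIdeal_le (L : AddSubgroup (Fin s → ℤ)) :
    latticeIdeal K L ≤ RingHom.ker (phi K L) := by
  rw [latticeIdeal, Ideal.span_le]
  rintro f ⟨a, ha, rfl⟩
  exact (phi_binomial_eq_zero_iff L a).2 ha

lemma monomial_sub_mem (L : AddSubgroup (Fin s → ℤ)) (u v : Fin s →₀ ℕ) (c : K)
    (h : toZ u - toZ v ∈ L) : monomial u c - monomial v c ∈ latticeIdeal K L := by
  have h1 : latticeBinomial K (toZ u - toZ v) ∈ latticeIdeal K L :=
    Ideal.subset_span ⟨_, h, rfl⟩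
  have h2 : monomial u c - monomial v c =
      (C c * ∏ i, X i ^ (min (u i) (v i))) * latticeBinomial K (toZ u - toZ v) := by
    rw [latticeBinomial, mul_sub, mul_assoc, mul_assoc, ← Finset.prod_mul_distrib,
      ← Finset.prod_mul_distrib, monomial_eq_prod, monomial_eq_prod]
    congr 2 <;>
    · refine Finset.prod_congr rfl fun i _ => ?_
      rw [← pow_add]
      congr 1
      simp only [toZ, Pi.sub_apply]
      omega
  rw [h2]
  exact Ideal.mul_mem_left _ _ h1

lemma ker_phi (L : AddSubgroup (Fin s → ℤ)) :
    RingHom.ker (phi K L) = latticeIdeal K L := by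
  classical
  refine le_antisymm ?_ (latticeIdeal_le L)
  let rep : ((Fin s → ℤ) ⧸ L) → (Fin s →₀ ℕ) := fun q =>
    if h : ∃ u : Fin s →₀ ℕ, (QuotientAddGroup.mk (toZ u) : (Fin s → ℤ) ⧸ L) = q
      then h.choose else 0
  have hrep : ∀ u : Fin s →₀ ℕ, toZ u - toZ (rep (QuotientAddGroup.mk (toZ u))) ∈ L := by
    intro u
    have h : ∃ v : Fin s →₀ ℕ, (QuotientAddGroup.mk (toZ v) : (Fin s → ℤ) ⧸ L) =
      QuotientAddGroup.mk (toZ u) := ⟨u, rfl⟩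
    have h2 : rep (QuotientAddGroup.mk (toZ u)) = h.choose := by
      simp only [rep]
      rw [dif_pos h]
    have h3 := h.choose_spec
    rw [← h2, QuotientAddGroup.eq] at h3
    rwa [sub_eq_add_neg, add_comm]
  let ψ : AddMonoidAlgebra K ((Fin s → ℤ) ⧸ L) →+ MvPolynomial (Fin s) K :=
    (Finsupp.liftAddHom (fun q => (monomial (rep q) : K →ₗ[K] _).toAddMonoidHom)).comp
      (AddMonoidAlgebra.coeffAddEquiv (R := K) (M := (Fin s → ℤ) ⧸ L)).toAddMonoidHom
  have key : ∀ f : MvPolynomial (Fin s) K, f - ψ (phi K L f) ∈ latticeIdeal K L := by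
    intro f
    induction f using MvPolynomial.induction_on' with
    | monomial u c =>
      rw [phi_monomial]
      have : ψ (AddMonoidAlgebra.single (QuotientAddGroup.mk (toZ u)) c) =
        monomial (rep (QuotientAddGroup.mk (toZ u))) c :=
        Finsupp.liftAddHom_apply_single _ _ _
      rw [this]
      exact monomial_sub_mem L _ _ _ (hrep u)
    | add p q hp hq =>
      rw [map_add, map_add, add_sub_add_comm]
      exact Ideal.add_mem _ hp hq
  intro f hf
  have := key f
  rw [RingHom.mem_ker] at hf
  rwa [hf, map_zero, sub_zero] at this

/-- classes of monomials of degree d -/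
def classes (L : AddSubgroup (Fin s → ℤ)) (d : ℕ) : Set ((Fin s → ℤ) ⧸ L) :=
  {q | ∃ u : Fin s →₀ ℕ, u.degree = d ∧ QuotientAddGroup.mk (toZ u) = q}

lemma hilbert_eq (L : AddSubgroup (Fin s → ℤ)) (d : ℕ) :
    hilbertFunction (latticeIdeal K L) d = (classes L d).ncard := by
  classical
  let g : ↥(homogeneousSubmodule (Fin s) K d) →ₗ[K] AddMonoidAlgebra K ((Fin s → ℤ) ⧸ L) :=
    (phi K L).toLinearMap ∘ₗ (homogeneousSubmodule (Fin s) K d).subtype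
  have hker : Submodule.comap (homogeneousSubmodule (Fin s) K d).subtype
      (Submodule.restrictScalars K (latticeIdeal K L)) = LinearMap.ker g := by
    ext x
    rw [← ker_phi]
    simp [g, RingHom.mem_ker]
  have hb : LinearIndependent K (fun q : classes L d =>
      (AddMonoidAlgebra.single (q : (Fin s → ℤ) ⧸ L) (1 : K))) :=
    ((Finsupp.linearIndependent_single_one K ((Fin s → ℤ) ⧸ L)).map'
      (AddMonoidAlgebra.coeffLinearEquiv K).symm.toLinearMap (LinearEquiv.ker _)).comp _
        Subtype.val_injective
  have hr : LinearMap.range g = Submodule.span K (Set.range (fun q : classes L d =>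
      (AddMonoidAlgebra.single (q : (Fin s → ℤ) ⧸ L) (1 : K)))) := by
    have : LinearMap.range g = Submodule.map (phi K L).toLinearMap
        (homogeneousSubmodule (Fin s) K d) := by
      simp only [g, LinearMap.range_comp, Submodule.range_subtype]
    rw [this, homogeneousSubmodule_eq_finsupp_supported, AddMonoidAlgebra.supported_eq_span_single,
      Submodule.map_span]
    congr 1
    ext x
    constructor
    · rintro ⟨_, ⟨u, hu, rfl⟩, rfl⟩
      refine ⟨⟨QuotientAddGroup.mk (toZ u), u, hu, rfl⟩, ?_⟩
      exact (phi_monomial L u 1).symm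
    · rintro ⟨⟨_, u, hu, rfl⟩, rfl⟩
      exact ⟨monomial u 1, ⟨u, hu, rfl⟩, phi_monomial L u 1⟩
  rw [hilbertFunction, hker, (LinearMap.quotKerEquivRange g).finrank_eq, hr]
  have h2 := Module.finrank_eq_nat_card_basis (Module.Basis.span hb)
  rw [h2]
  rfl

lemma le_of_span {m : ℕ} (α : Fin m → (Fin s → ℤ)) (L : AddSubgroup (Fin s → ℤ))
    (h : latticeIdeal K L = Ideal.span (Set.range fun k : Fin m => latticeBinomial K (α k))) :
    L = AddSubgroup.closure (Set.range α) := by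
  apply le_antisymm
  · intro a ha
    rw [← phi_binomial_eq_zero_iff (K := K)]
    have h1 : latticeBinomial K a ∈ latticeIdeal K L := Ideal.subset_span ⟨_, ha, rfl⟩
    rw [h] at h1
    have h2 : Ideal.span (Set.range fun k : Fin m => latticeBinomial K (α k)) ≤
        RingHom.ker (phi K (AddSubgroup.closure (Set.range α))) := by
      rw [Ideal.span_le]
      rintro _ ⟨k, rfl⟩
      exact (phi_binomial_eq_zero_iff _ _).2 (AddSubgroup.subset_closure ⟨k, rfl⟩)
    exact h2 h1
  · rw [AddSubgroup.closure_le]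
    rintro _ ⟨k, rfl⟩
    show α k ∈ L
    rw [← phi_binomial_eq_zero_iff (K := K)]
    apply latticeIdeal_le
    rw [h]
    exact Ideal.subset_span ⟨k, rfl⟩

open Matrix in
/-- membership in the lattice through the Smith normal form -/
lemma mem_iff {n m : ℕ} (α : Fin m → (Fin (n+1) → ℤ)) (hnm : n ≤ m)
    (U : Matrix (Fin m) (Fin m) ℤ) (V : Matrix (Fin (n+1)) (Fin (n+1)) ℤ)
    (hU : IsUnit U.det) (hV : IsUnit V.det) (dvec : ℕ → ℤ)
    (hSmith : ∀ i j, (U * Matrix.of α * V) i j =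
      if (i : ℕ) = (j : ℕ) ∧ (j : ℕ) < n then dvec (j : ℕ) else 0) (a : Fin (n+1) → ℤ) :
    a ∈ AddSubgroup.closure (Set.range α) ↔
      (∀ k : Fin n, dvec k ∣ (a ᵥ* V) k.castSucc) ∧ (a ᵥ* V) (Fin.last n) = 0 := by
  have h1 : a ∈ AddSubgroup.closure (Set.range α) ↔ ∃ c : Fin m → ℤ, c ᵥ* Matrix.of α = a := by
    rw [← Submodule.span_int_eq_addSubgroupClosure, Submodule.mem_toAddSubgroup,
      Submodule.mem_span_range_iff_exists_fun]
    refine exists_congr fun c => ?_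
    rw [Matrix.vecMul_eq_sum]
    rfl
  have hD : ∀ (c : Fin m → ℤ) (j : Fin n),
      (c ᵥ* (U * Matrix.of α * V)) j.castSucc = c (Fin.castLE hnm j) * dvec j := by
    intro c j
    rw [Matrix.vecMul, dotProduct, Finset.sum_eq_single (Fin.castLE hnm j)]
    · rw [hSmith]; simp
    · intro i _ hi
      rw [hSmith, if_neg, mul_zero]
      rintro ⟨h, _⟩
      exact hi (Fin.ext h)
    · simp
  have hD2 : ∀ (c : Fin m → ℤ), (c ᵥ* (U * Matrix.of α * V)) (Fin.last n) = 0 := by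
    intro c
    rw [Matrix.vecMul, dotProduct]
    refine Finset.sum_eq_zero fun i _ => ?_
    rw [hSmith, if_neg, mul_zero]
    simp
  rw [h1]
  constructor
  · rintro ⟨c, rfl⟩
    have h2 : (c ᵥ* Matrix.of α) ᵥ* V = (c ᵥ* U⁻¹) ᵥ* (U * Matrix.of α * V) := by
      rw [Matrix.vecMul_vecMul, Matrix.vecMul_vecMul, Matrix.mul_assoc U, 
        Matrix.nonsing_inv_mul_cancel_left _ _ hU]
    rw [h2]
    exact ⟨fun k => by rw [hD]; exact dvd_mul_left _ _, hD2 _⟩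
  · rintro ⟨h2, h3⟩
    choose b hb using h2
    let c : Fin m → ℤ := fun i => if h : (i : ℕ) < n then b ⟨i, h⟩ else 0
    refine ⟨c ᵥ* U, ?_⟩
    have h4 : (c ᵥ* (U * Matrix.of α * V)) = a ᵥ* V := by
      ext j
      refine Fin.lastCases ?_ (fun j => ?_) j
      · rw [hD2, h3]
      · rw [hD, hb]
        simp [c, mul_comm]
    have h5 := congrArg (· ᵥ* V⁻¹) h4
    simp only [Matrix.vecMul_vecMul] at h5
    rw [Matrix.mul_nonsing_inv_cancel_right _ _ hV, Matrix.mul_nonsing_inv _ hV,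
      Matrix.vecMul_one] at h5
    rw [Matrix.vecMul_vecMul, h5]

open Matrix in
lemma sum_zero_iff {n : ℕ} (L : AddSubgroup (Fin (n+1) → ℤ)) (hL : ∀ a ∈ L, ∑ i, a i = 0)
    (V : Matrix (Fin (n+1)) (Fin (n+1)) ℤ) (hV : IsUnit V.det) (dvec : ℕ → ℤ)
    (hpos : ∀ k, k < n → 0 < dvec k)
    (hmem : ∀ a, a ∈ L ↔
      (∀ k : Fin n, dvec k ∣ (a ᵥ* V) k.castSucc) ∧ (a ᵥ* V) (Fin.last n) = 0)
    (a : Fin (n+1) → ℤ) : ∑ i, a i = 0 ↔ (a ᵥ* V) (Fin.last n) = 0 := by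
  have hinv : ∀ x : Fin (n+1) → ℤ, (x ᵥ* V⁻¹) ᵥ* V = x := fun x => by
    rw [Matrix.vecMul_vecMul, Matrix.nonsing_inv_mul _ hV, Matrix.vecMul_one]
  have hinv' : ∀ x : Fin (n+1) → ℤ, (x ᵥ* V) ᵥ* V⁻¹ = x := fun x => by
    rw [Matrix.vecMul_vecMul, Matrix.mul_nonsing_inv _ hV, Matrix.vecMul_one]
  let w : Fin (n+1) → ℤ := V⁻¹ *ᵥ 1
  have hw : ∀ x : Fin (n+1) → ℤ, ∑ i, (x ᵥ* V⁻¹) i = ∑ j, x j * w j := by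
    intro x
    have := Matrix.dotProduct_mulVec x V⁻¹ 1
    rw [dotProduct_one] at this
    rw [← this]; rfl
  have hw0 : ∀ k : Fin n, w k.castSucc = 0 := by
    intro k
    have h1 := hL ((Pi.single k.castSucc (dvec k)) ᵥ* V⁻¹) (by
      rw [hmem, hinv]
      refine ⟨fun j => ?_, ?_⟩
      · by_cases h : j = k
        · subst h; simp
        · rw [Pi.single_eq_of_ne]
          · exact dvd_zero _
          · simpa using h
      · rw [Pi.single_eq_of_ne]
        exact (Fin.castSucc_lt_last k).ne')
    rw [hw, Finset.sum_eq_single k.castSucc] at h1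
    · rw [Pi.single_eq_same] at h1
      exact (mul_eq_zero.1 h1).resolve_left (hpos k k.2).ne'
    · intro j _ hj
      rw [Pi.single_eq_of_ne hj, zero_mul]
    · simp
  have hs : ∀ a : Fin (n+1) → ℤ, ∑ i, a i = (a ᵥ* V) (Fin.last n) * w (Fin.last n) := by
    intro a
    conv_lhs => rw [← hinv' a]
    rw [hw, Fin.sum_univ_castSucc]
    simp [hw0]
  have hl : w (Fin.last n) ≠ 0 := by
    intro h
    have := hs (Pi.single 0 1)
    rw [h] at this
    simp at this
  rw [hs]
  simp [hl]

lemma classes_eq {n : ℕ} (L : AddSubgroup (Fin (n+1) → ℤ)) (hL : ∀ a ∈ L, ∑ i, a i = 0)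
    (M : ℕ) (hM : 0 < M) (h : ∀ a : Fin (n+1) → ℤ, ∑ i, a i = 0 → (M : ℤ) • a ∈ L)
    (d : ℕ) (hd : n * M ≤ d) :
    classes L d = {q | ∃ a : Fin (n+1) → ℤ, ∑ i, a i = d ∧ QuotientAddGroup.mk a = q} := by
  ext q
  constructor
  · rintro ⟨u, hu, rfl⟩
    refine ⟨toZ u, ?_, rfl⟩
    simp only [toZ]
    rw [← hu, Finsupp.degree_eq_sum]
    push_cast; rfl
  · rintro ⟨a, ha, rfl⟩
    let b : Fin n → ℤ := fun i => a i.succ / M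
    let c : Fin (n+1) → ℤ := Fin.cons (-∑ i, b i) b
    have hc : ∑ i, c i = 0 := by simp [c, Fin.sum_univ_succ]
    have hM' : (0 : ℤ) < M := by exact_mod_cast hM
    let e : Fin (n+1) → ℤ := a - (M : ℤ) • c
    have hes : ∀ i : Fin n, e i.succ = a i.succ % M := by
      intro i
      simp [e, c, b, Int.emod_def]
    have hesum : ∑ i, e i = d := by
      simp only [e, Pi.sub_apply, Pi.smul_apply, Finset.sum_sub_distrib, ← Finset.smul_sum, hc, ha]
      simp
    have he : ∀ i, 0 ≤ e i := by
      intro i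
      refine Fin.cases ?_ (fun i => ?_) i
      · rw [Fin.sum_univ_succ] at hesum
        have h3 : ∑ i : Fin n, e i.succ ≤ ∑ i : Fin n, (M : ℤ) :=
          Finset.sum_le_sum fun i _ => by
            rw [hes]; exact (Int.emod_lt_of_pos _ hM').le
        simp at h3
        have : (n : ℤ) * M ≤ d := by exact_mod_cast hd
        linarith
      · rw [hes]; exact Int.emod_nonneg _ hM'.ne'
    let u : Fin (n+1) →₀ ℕ := Finsupp.equivFunOnFinite.symm (fun i => (e i).toNat)
    have hu : toZ u = e := by
      ext i
      simp [toZ, u, he i]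
    refine ⟨u, ?_, ?_⟩
    · have : ((u.degree : ℕ) : ℤ) = d := by
        rw [← hesum, ← hu, Finsupp.degree_eq_sum]
        push_cast; rfl
      exact_mod_cast this
    · rw [hu, QuotientAddGroup.eq]
      have : -e + a = (M : ℤ) • c := by simp [e]
      rw [this]
      exact h c hc

open Matrix in
lemma ncard_classes {n : ℕ} (L : AddSubgroup (Fin (n+1) → ℤ)) (hL : ∀ a ∈ L, ∑ i, a i = 0)
    (V : Matrix (Fin (n+1)) (Fin (n+1)) ℤ) (hV : IsUnit V.det) (dvec : ℕ → ℤ)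
    (hpos : ∀ k, k < n → 0 < dvec k)
    (hmem : ∀ a, a ∈ L ↔
      (∀ k : Fin n, dvec k ∣ (a ᵥ* V) k.castSucc) ∧ (a ᵥ* V) (Fin.last n) = 0) (d : ℕ) :
    (({q | ∃ a : Fin (n+1) → ℤ, ∑ i, a i = d ∧ QuotientAddGroup.mk a = q} :
      Set ((Fin (n+1) → ℤ) ⧸ L)).ncard : ℤ) = ∏ k ∈ Finset.range n, dvec k := by
  classical
  have hinv : ∀ x : Fin (n+1) → ℤ, (x ᵥ* V⁻¹) ᵥ* V = x := fun x => by
    rw [Matrix.vecMul_vecMul, Matrix.nonsing_inv_mul _ hV, Matrix.vecMul_one]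
  have hz := sum_zero_iff L hL V hV dvec hpos hmem
  let F : Finset (Fin n → ℤ) := Fintype.piFinset (fun k : Fin n => Finset.Ico 0 (dvec k))
  let f : (Fin n → ℤ) → ((Fin (n+1) → ℤ) ⧸ L) := fun b =>
    QuotientAddGroup.mk (Pi.single 0 (d : ℤ) + (Fin.snoc b 0 : Fin (n+1) → ℤ) ᵥ* V⁻¹)
  have himg : {q | ∃ a : Fin (n+1) → ℤ, ∑ i, a i = d ∧ QuotientAddGroup.mk a = q} =
      Set.image f (F : Set (Fin n → ℤ)) := by
    ext q
    constructor
    · rintro ⟨a, ha, rfl⟩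
      let y := (a - Pi.single 0 (d : ℤ)) ᵥ* V
      have hy : y (Fin.last n) = 0 := by
        rw [← hz]
        simp [Finset.sum_sub_distrib, ha]
      refine ⟨fun k => y k.castSucc % dvec k, ?_, ?_⟩
      · simp only [F, Finset.mem_coe, Fintype.mem_piFinset, Finset.mem_Ico]
        exact fun k => ⟨Int.emod_nonneg _ (hpos k k.2).ne', Int.emod_lt_of_pos _ (hpos k k.2)⟩
      · simp only [f]
        rw [QuotientAddGroup.eq, hmem]
        have h1 : ∀ z : Fin (n+1) → ℤ, (-(Pi.single 0 (d : ℤ) + z ᵥ* V⁻¹) + a) ᵥ* V = y - z := by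
          intro z
          have : (-(Pi.single 0 (d : ℤ) + z ᵥ* V⁻¹) + a) = (a - Pi.single 0 (d : ℤ)) - z ᵥ* V⁻¹ := by
            abel
          rw [this, Matrix.sub_vecMul, hinv]
        rw [h1]
        refine ⟨fun k => ?_, ?_⟩
        · simp only [Pi.sub_apply, Fin.snoc_castSucc]
          exact Int.dvd_self_sub_emod
        · simp [hy]
    · rintro ⟨b, _, rfl⟩
      refine ⟨_, ?_, rfl⟩
      have : ∑ i, ((Fin.snoc b 0 : Fin (n+1) → ℤ) ᵥ* V⁻¹) i = 0 := by
        rw [hz, hinv]; simp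
      simp [Finset.sum_add_distrib, this]
  have hinj : Set.InjOn f (F : Set (Fin n → ℤ)) := by
    intro b hb b' hb' hbb
    simp only [F, Finset.mem_coe, Fintype.mem_piFinset, Finset.mem_Ico] at hb hb'
    simp only [f] at hbb
    rw [QuotientAddGroup.eq, hmem] at hbb
    ext k
    have h1 := hbb.1 k
    have h2 : (-(Pi.single 0 (d : ℤ) + (Fin.snoc b 0 : Fin (n+1) → ℤ) ᵥ* V⁻¹) +
        (Pi.single 0 (d : ℤ) + (Fin.snoc b' 0 : Fin (n+1) → ℤ) ᵥ* V⁻¹)) =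
        (Fin.snoc b' 0 : Fin (n+1) → ℤ) ᵥ* V⁻¹ - (Fin.snoc b 0 : Fin (n+1) → ℤ) ᵥ* V⁻¹ := by
      abel
    rw [h2, Matrix.sub_vecMul, hinv, hinv] at h1
    simp only [Pi.sub_apply, Fin.snoc_castSucc] at h1
    have h3 : b k % dvec k = b' k % dvec k := (Int.modEq_iff_dvd.2 h1)
    rwa [Int.emod_eq_of_lt (hb k).1 (hb k).2, Int.emod_eq_of_lt (hb' k).1 (hb' k).2] at h3
  rw [himg, hinj.ncard_image, Set.ncard_coe_finset, Fintype.card_piFinset,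
    Finset.prod_range]
  push_cast
  refine Finset.prod_congr rfl fun k _ => ?_
  simp [(hpos k k.2).le]

end LatticeAux

/-- Theorem: let `L ⊆ S` be a graded lattice ideal of dimension 1 (i.e. `L = I(𝓛)` for a
homogeneous lattice `𝓛` of rank `s-1`) generated by the binomials
`t^{α_1⁺} - t^{α_1⁻}, …, t^{α_m⁺} - t^{α_m⁻}`.  Then `deg S/L = d_1 ⋯ d_{s-1}`, where
`d_1, …, d_{s-1}` are the invariant factors (diagonal entries of the Smith normal form
`D = UAV`) of the matrix `A` whose rows are `α_1, …, α_m`. -/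
theorem degree_of_binomial_generated_lattice_ideal
    (K : Type*) [Field K] {s m : ℕ} (hs : 0 < s)
    (α : Fin m → (Fin s → ℤ))
    (J : Ideal (MvPolynomial (Fin s) K))
    (hJgen : J = Ideal.span (Set.range fun k : Fin m => latticeBinomial K (α k)))
    (hJlat : ∃ 𝓛 : AddSubgroup (Fin s → ℤ), (∀ a ∈ 𝓛, ∑ i, a i = 0) ∧
      Module.finrank ℤ 𝓛 = s - 1 ∧ J = latticeIdeal K 𝓛)
    (U : Matrix (Fin m) (Fin m) ℤ) (V : Matrix (Fin s) (Fin s) ℤ)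
    (hU : IsUnit U.det) (hV : IsUnit V.det)
    (dvec : ℕ → ℤ)
    (hpos : ∀ k, k < s - 1 → 0 < dvec k)
    (hdvd : ∀ k, k + 1 < s - 1 → dvec k ∣ dvec (k + 1))
    (hSmith : ∀ i j, (U * Matrix.of α * V) i j =
      if (i : ℕ) = (j : ℕ) ∧ (j : ℕ) < s - 1 then dvec (j : ℕ) else 0) :
    ∃ N : ℕ, ∀ d ≥ N, (hilbertFunction J d : ℤ) =
      ∏ k ∈ Finset.range (s - 1), dvec k := by
  obtain ⟨L, hL, hrk, hJ⟩ := hJlat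
  obtain ⟨n, rfl⟩ : ∃ n, s = n + 1 := ⟨s - 1, by omega⟩
  simp only [Nat.add_sub_cancel] at *
  have hLc : L = AddSubgroup.closure (Set.range α) :=
    LatticeAux.le_of_span (K := K) α L (hJ.symm.trans hJgen)
  have hnm : n ≤ m := by
    have h1 := finrank_range_le_card (R := ℤ) α
    have h2 : (Submodule.span ℤ (Set.range α)).toAddSubgroup = L := by
      rw [hLc, Submodule.span_int_eq_addSubgroupClosure]
    rw [← hrk, ← h2]
    rw [Fintype.card_fin] at h1
    exact h1
  have hmem : ∀ a, a ∈ L ↔ (∀ k : Fin n, dvec k ∣ (Matrix.vecMul a V) k.castSucc) ∧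
      (Matrix.vecMul a V) (Fin.last n) = 0 := by
    intro a
    rw [hLc]
    exact LatticeAux.mem_iff α hnm U V hU hV dvec hSmith a
  have hPpos : 0 < ∏ k ∈ Finset.range n, dvec k :=
    Finset.prod_pos fun k hk => hpos k (Finset.mem_range.1 hk)
  obtain ⟨M, hM⟩ := Int.eq_ofNat_of_zero_le hPpos.le
  refine ⟨n * M, fun d hd => ?_⟩
  rw [hJ, LatticeAux.hilbert_eq, LatticeAux.classes_eq L hL M (by omega) ?_ d hd,
    LatticeAux.ncard_classes L hL V hV dvec hpos hmem d]
  intro a ha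
  rw [LatticeAux.sum_zero_iff L hL V hV dvec hpos hmem] at ha
  rw [hmem, Matrix.smul_vecMul, ← hM]
  refine ⟨fun k => ?_, ?_⟩
  · rw [Pi.smul_apply, smul_eq_mul]
    exact (Finset.dvd_prod_of_mem dvec (Finset.mem_range.2 k.2)).mul_right _
  · rw [Pi.smul_apply, ha, smul_zero]
end

section
/- If I(L) ⊂ S is a graded lattice ideal of dimension 1, then Z^s/L is torsion-free if and only if I(L) = (t_1 − t_s, t_2 − t_s, …, t_{s−1} − t_s). -/
open MvPolynomial

lemma exists_nsmul_mem_of_sum_zero {s : ℕ} (hs : 0 < s)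
    (L : AddSubgroup (Fin s → ℤ))
    (hhom : ∀ a ∈ L, ∑ i, a i = 0)
    (hrank : Module.finrank ℤ L = s - 1) (h : Fin s → ℤ) (hh : ∑ i, h i = 0) :
    ∃ n : ℕ, 0 < n ∧ n • h ∈ L := by
  let N : Submodule ℤ (Fin s → ℤ) := AddSubgroup.toIntSubmodule L
  have hN : Module.finrank ℤ N = s - 1 := hrank
  have h1 := Submodule.finrank_quotient_add_finrank N
  rw [hN, Module.finrank_fin_fun] at h1
  have h2 : Module.finrank ℤ ((Fin s → ℤ) ⧸ N) = 1 := by omega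
  let e : Fin s → ℤ := Pi.single ⟨0, hs⟩ 1
  have he : ∑ i, e i = 1 := by simp [e]
  have h3 : ¬ LinearIndependent ℤ ![N.mkQ h, N.mkQ e] := by
    intro hl
    have := hl.fintype_card_le_finrank
    simp [h2] at this
  rw [LinearIndependent.pair_iff] at h3
  push Not at h3
  obtain ⟨a, b, hab, hne⟩ := h3
  rw [← map_smul, ← map_smul, ← map_add, Submodule.mkQ_apply,
    Submodule.Quotient.mk_eq_zero] at hab
  have hab' : a • h + b • e ∈ L := hab
  have hsum := hhom _ hab'
  simp only [Pi.add_apply, Pi.smul_apply, smul_eq_mul, Finset.sum_add_distrib,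
    ← Finset.mul_sum, hh, he] at hsum
  have hb : b = 0 := by simpa using hsum
  subst hb
  have ha : a ≠ 0 := fun h0 => hne h0 rfl
  simp only [zero_smul, add_zero] at hab'
  refine ⟨a.natAbs, Int.natAbs_pos.mpr ha, ?_⟩
  rw [← natCast_zsmul]
  rcases Int.natAbs_eq a with h4 | h4
  · rw [← h4]; exact hab'
  · have : ((a.natAbs : ℕ) : ℤ) = -a := by omega
    rw [this, neg_smul]
    exact L.neg_mem hab'

lemma mem_of_sum_zero {s : ℕ} (j : Fin s) (L : AddSubgroup (Fin s → ℤ))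
    (hL : ∀ i : Fin s, (Pi.single i 1 - Pi.single j 1 : Fin s → ℤ) ∈ L)
    (a : Fin s → ℤ) (ha : ∑ i, a i = 0) : a ∈ L := by
  have : a = ∑ i, a i • (Pi.single i 1 - Pi.single j 1 : Fin s → ℤ) := by
    simp only [smul_sub, Finset.sum_sub_distrib, ← Finset.sum_smul, ha, zero_smul, sub_zero]
    exact pi_eq_sum_univ' a
  rw [this]
  exact L.sum_mem fun i _ => L.zsmul_mem (hL i) _

lemma toNat_sum_eq {s : ℕ} (a : Fin s → ℤ) (ha : ∑ i, a i = 0) :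
    ∑ i, (a i).toNat = ∑ i, (-(a i)).toNat := by
  zify
  rw [← sub_eq_zero, ← Finset.sum_sub_distrib, ← ha]
  refine Finset.sum_congr rfl fun i _ => ?_
  omega

lemma single_sub_mem (K : Type*) [Field K] {s : ℕ} (L : AddSubgroup (Fin s → ℤ))
    (i j : Fin s) (h : (X i - X j : MvPolynomial (Fin s) K) ∈ latticeIdeal K L) :
    (Pi.single i 1 - Pi.single j 1 : Fin s → ℤ) ∈ L := by
  let q : Fin s → (Fin s → ℤ) ⧸ L := fun i => QuotientAddGroup.mk (Pi.single i 1)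
  let φ : MvPolynomial (Fin s) K →ₐ[K] AddMonoidAlgebra K ((Fin s → ℤ) ⧸ L) :=
    MvPolynomial.aeval fun i => AddMonoidAlgebra.single (q i) 1
  have hprod : ∀ n : Fin s → ℕ, φ (∏ i, X i ^ n i) =
      AddMonoidAlgebra.single (∑ i, n i • q i) 1 := by
    intro n
    have : ∀ t : Finset (Fin s), φ (∏ i ∈ t, X i ^ n i) =
        AddMonoidAlgebra.single (∑ i ∈ t, n i • q i) 1 := by
      intro t
      induction t using Finset.induction_on with
      | empty =>
        rw [Finset.prod_empty, Finset.sum_empty, map_one, AddMonoidAlgebra.one_def]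
      | insert a t ha ih =>
        rw [Finset.prod_insert ha, Finset.sum_insert ha, map_mul, ih]
        simp [φ, AddMonoidAlgebra.single_pow, AddMonoidAlgebra.single_mul_single]
    exact this _
  have hle : latticeIdeal K L ≤ RingHom.ker φ := by
    refine Ideal.span_le.mpr ?_
    rintro f ⟨a, ha, rfl⟩
    simp only [SetLike.mem_coe, RingHom.mem_ker, latticeBinomial, map_sub]
    rw [hprod, hprod, sub_eq_zero]
    congr 1
    rw [← sub_eq_zero, ← Finset.sum_sub_distrib]
    have h1 : ∀ i, (a i).toNat • q i - (-(a i)).toNat • q i = a i • q i := by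
      intro i
      rw [← natCast_zsmul, ← natCast_zsmul, ← sub_smul]
      congr 1
      omega
    simp only [h1]
    have h2 : ∑ i, a i • q i = QuotientAddGroup.mk' L (∑ i, a i • Pi.single i 1) := by
      rw [map_sum]
      simp [q]
    rw [h2, ← pi_eq_sum_univ' a]
    exact (QuotientAddGroup.eq_zero_iff a).mpr ha
  have h3 := hle h
  rw [RingHom.mem_ker, map_sub, sub_eq_zero] at h3
  simp only [φ, aeval_X] at h3
  have h4 : q i = q j := by
    by_contra hne
    have := congrArg (fun f => f.coeff (q i)) h3
    simp [AddMonoidAlgebra.coeff_single, Finsupp.single_apply, Ne.symm hne] at this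
  rw [← QuotientAddGroup.eq_zero_iff, QuotientAddGroup.mk_sub, sub_eq_zero]
  exact h4

lemma latticeBinomial_single_sub (K : Type*) [Field K] {s : ℕ} (i j : Fin s) (hij : i ≠ j) :
    latticeBinomial K (Pi.single i 1 - Pi.single j 1 : Fin s → ℤ) = X i - X j := by
  unfold latticeBinomial
  congr 1
  · rw [Finset.prod_eq_single i]
    · simp [hij]
    · intro b _ hb
      by_cases hbj : b = j
      · subst hbj; simp [hb]
      · simp [hb, hbj]
    · simp
  · rw [Finset.prod_eq_single j]
    · simp [hij.symm]
    · intro b _ hb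
      by_cases hbj : b = i
      · subst hbj; simp [hb]
      · simp [hb, hbj]
    · simp

/-- Theorem: if `I(L) ⊆ S` is a graded lattice ideal of dimension 1 (i.e. `L` homogeneous of
rank `s-1`), then `ℤ^s/L` is torsion-free if and only if
`I(L) = (t_1 - t_s, …, t_{s-1} - t_s)`. -/
theorem torsionFree_iff_latticeIdeal_eq_span_linear_binomials
    (K : Type*) [Field K] {s : ℕ} (hs : 0 < s)
    (L : AddSubgroup (Fin s → ℤ))
    (hhom : ∀ a ∈ L, ∑ i, a i = 0)
    (hrank : Module.finrank ℤ L = s - 1) :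
    (∀ x : (Fin s → ℤ) ⧸ L, (∃ n : ℕ, 0 < n ∧ n • x = 0) → x = 0) ↔
      latticeIdeal K L = Ideal.span {f : MvPolynomial (Fin s) K |
        ∃ i : Fin s, (i : ℕ) < s - 1 ∧
          f = X i - X (⟨s - 1, Nat.sub_lt hs Nat.one_pos⟩ : Fin s)} := by
  set j : Fin s := ⟨s - 1, Nat.sub_lt hs Nat.one_pos⟩ with hj
  have hlt : ∀ i : Fin s, i ≠ j → (i : ℕ) < s - 1 := by
    intro i hi
    have : (i : ℕ) ≠ s - 1 := fun h => hi (Fin.ext h)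
    omega
  constructor
  · intro htf
    have hmem : ∀ i : Fin s, (Pi.single i 1 - Pi.single j 1 : Fin s → ℤ) ∈ L := by
      intro i
      obtain ⟨n, hn, hnL⟩ := exists_nsmul_mem_of_sum_zero hs L hhom hrank
        (Pi.single i 1 - Pi.single j 1) (by simp)
      rw [← QuotientAddGroup.eq_zero_iff]
      refine htf _ ⟨n, hn, ?_⟩
      rw [← QuotientAddGroup.mk_nsmul]
      exact (QuotientAddGroup.eq_zero_iff _).mpr hnL
    apply le_antisymm
    · refine Ideal.span_le.mpr ?_
      rintro f ⟨a, ha, rfl⟩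
      rw [SetLike.mem_coe, ← Ideal.Quotient.eq_zero_iff_mem]
      set J := Ideal.span {f : MvPolynomial (Fin s) K |
        ∃ i : Fin s, (i : ℕ) < s - 1 ∧ f = X i - X j} with hJ
      have hX : ∀ i : Fin s, Ideal.Quotient.mk J (X i) = Ideal.Quotient.mk J (X j) := by
        intro i
        by_cases hi : i = j
        · rw [hi]
        · rw [Ideal.Quotient.eq]
          exact Ideal.subset_span ⟨i, hlt i hi, rfl⟩
      simp only [latticeBinomial, map_sub, map_prod, map_pow, hX]
      rw [Finset.prod_pow_eq_pow_sum, Finset.prod_pow_eq_pow_sum,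
        toNat_sum_eq a (hhom a ha), sub_self]
    · refine Ideal.span_le.mpr ?_
      rintro f ⟨i, hi, rfl⟩
      have hij : i ≠ j := by
        rintro rfl
        simp [hj] at hi
      exact Ideal.subset_span ⟨_, hmem i, (latticeBinomial_single_sub K i j hij).symm⟩
  · intro heq x
    have hmem : ∀ i : Fin s, (Pi.single i 1 - Pi.single j 1 : Fin s → ℤ) ∈ L := by
      intro i
      by_cases hi : i = j
      · rw [hi, sub_self]; exact L.zero_mem
      · apply single_sub_mem K L i j
        rw [heq]
        exact Ideal.subset_span ⟨i, hlt i hi, rfl⟩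
    induction x using QuotientAddGroup.induction_on with
    | H a =>
      rintro ⟨n, hn, hna⟩
      rw [← QuotientAddGroup.mk_nsmul, QuotientAddGroup.eq_zero_iff] at hna
      rw [QuotientAddGroup.eq_zero_iff]
      apply mem_of_sum_zero j L hmem
      have h5 := hhom _ hna
      simp only [Pi.smul_apply, ← Finset.smul_sum] at h5
      rcases smul_eq_zero.mp h5 with h6 | h6
      · omega
      · exact h6
end

section
/- Let S = K[t_1,…,t_s] be a graded polynomial ring over a field and I ⊂ S a graded ideal. If dim S/I ≥ 2 and depth S/I > 0, then the Hilbert function of S/I is strictly increasing: H_I(i) < H_I(i+1) for all i ≥ 0. -/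
open MvPolynomial

open scoped TensorProduct in
theorem aux_baseChange_pow {K R F : Type*} [Field K] [CommRing R] [Algebra K R] [Field F]
    [Algebra K F] (S : Set R) (k : ℕ) :
    ((Submodule.span K S) ^ k).baseChange F =
      (Submodule.span F ((Algebra.TensorProduct.includeRight : R →ₐ[K] F ⊗[K] R) '' S)) ^ k := by
  rw [Submodule.span_pow, Submodule.span_pow, Submodule.baseChange_span, ← Set.image_pow]
  rfl

theorem aux_mul {F B : Type*} [Field F] [CommRing B] [Algebra F B] (U : Submodule F B)
    (hU : U.FG) (L : B) (hL : L ∈ U) (hreg : L ∈ nonZeroDivisors B) (k : ℕ) :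
    Module.finrank F ↥(U ^ k) ≤ Module.finrank F ↥(U ^ (k + 1)) ∧
    (Module.finrank F ↥(U ^ k) = Module.finrank F ↥(U ^ (k + 1)) →
      ∀ n, Module.finrank F ↥(U ^ (k + n)) = Module.finrank F ↥(U ^ k)) := by
  have fin : ∀ n, Module.Finite F ↥(U ^ n) := fun n => Module.Finite.iff_fg.2 (hU.pow n)
  have hinj : Function.Injective (LinearMap.mulLeft F L) := by
    intro a b hab
    exact (mul_cancel_left_mem_nonZeroDivisors hreg).1 hab
  have hmap : ∀ n, (U ^ n).map (LinearMap.mulLeft F L) = Submodule.span F {L} * U ^ n := by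
    intro n
    ext x
    simp [Submodule.mem_span_singleton_mul]
  have hfr : ∀ n, Module.finrank F ↥(Submodule.span F {L} * U ^ n) = Module.finrank F ↥(U ^ n) := by
    intro n
    rw [← hmap]
    exact (Submodule.equivMapOfInjective _ hinj _).finrank_eq.symm
  have hle : ∀ n, Submodule.span F {L} * U ^ n ≤ U ^ (n + 1) := by
    intro n
    rw [pow_succ']
    exact mul_le_mul' (by simpa using hL) le_rfl
  refine ⟨?_, fun heq n => ?_⟩
  · rw [← hfr k]
    exact Submodule.finrank_mono (hle k)
  · have key : ∀ n, Submodule.span F {L} * U ^ (k + n) = U ^ (k + n + 1) := by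
      intro n
      induction n with
      | zero => exact Submodule.eq_of_le_of_finrank_eq (hle k) (by rw [hfr]; exact heq)
      | succ n ih =>
        rw [← add_assoc, pow_succ' U (k + n + 1)]
        nth_rewrite 2 [← ih]
        rw [pow_succ', mul_left_comm]
    induction n with
    | zero => rfl
    | succ n ih => rw [← add_assoc, ← key, hfr, ih]

open scoped TensorProduct in
theorem aux_regular {K R : Type*} [Field K] [CommRing R] [Algebra K R] {s : ℕ} (t : Fin s → R)
    (ht : ∀ r : R, (∀ j, r * t j = 0) → r = 0) :
    (∑ j : Fin s, (algebraMap (Polynomial K) (RatFunc K) (Polynomial.X ^ (j : ℕ))) ⊗ₜ[K] t j :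
      RatFunc K ⊗[K] R) ∈ nonZeroDivisors (RatFunc K ⊗[K] R) := by
  set e : Polynomial R ≃ₐ[K] Polynomial K ⊗[K] R :=
    (polyEquivTensor K R).trans (Algebra.TensorProduct.comm K R (Polynomial K)) with he
  set φ : Polynomial K ⊗[K] R →ₐ[K] RatFunc K ⊗[K] R :=
    Algebra.TensorProduct.map (IsScalarTower.toAlgHom K (Polynomial K) (RatFunc K))
      (AlgHom.id K R) with hφ
  have hφinj : Function.Injective φ := by
    have := Module.Flat.rTensor_preserves_injective_linearMap (M := R)
      (IsScalarTower.toAlgHom K (Polynomial K) (RatFunc K)).toLinearMap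
      (IsFractionRing.injective (Polynomial K) (RatFunc K))
    exact this
  set P : Polynomial R := ∑ j : Fin s, Polynomial.monomial (j : ℕ) (t j) with hP
  have hPcoeff : ∀ j : Fin s, P.coeff j = t j := by
    intro j
    simp [hP, Polynomial.coeff_monomial, Fin.val_inj]
  have hPreg : P ∈ nonZeroDivisors (Polynomial R) := by
    rw [Polynomial.mem_nonZeroDivisors_iff]
    intro a ha
    apply ht
    intro j
    have := congrArg (fun p => Polynomial.coeff p (j : ℕ)) ha
    simpa [hPcoeff] using this
  have heP : φ (e P) = ∑ j : Fin s, (algebraMap (Polynomial K) (RatFunc K) (Polynomial.X ^ (j : ℕ))) ⊗ₜ[K] t j := by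
    rw [hP, map_sum, map_sum]
    refine Finset.sum_congr rfl fun j _ => ?_
    have : e (Polynomial.monomial (j : ℕ) (t j)) = (Polynomial.X ^ (j : ℕ)) ⊗ₜ[K] t j := by
      rw [← AlgEquiv.eq_symm_apply]
      simp [he, polyEquivTensor_symm_apply_tmul_eq_smul, ← Polynomial.C_mul_X_pow_eq_monomial, Polynomial.smul_eq_C_mul]
    rw [this]
    simp [hφ]
  rw [← heP]
  have hclear : ∀ b : RatFunc K ⊗[K] R, ∃ q : Polynomial K, q ≠ 0 ∧ ∃ c, 
      algebraMap (Polynomial K) (RatFunc K) q • b = φ c := by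
    intro b
    induction b with
    | zero => exact ⟨1, one_ne_zero, 0, by simp⟩
    | tmul x r =>
      obtain ⟨a, q, hq, rfl⟩ := IsFractionRing.div_surjective (A := Polynomial K) x
      have hq0 := nonZeroDivisors.ne_zero hq
      have hq1 : algebraMap (Polynomial K) (RatFunc K) q ≠ 0 := by simpa using hq0
      refine ⟨q, hq0, a ⊗ₜ r, ?_⟩
      rw [TensorProduct.smul_tmul', smul_eq_mul, mul_div_cancel₀ _ hq1]
      simp [hφ]
    | add x y hx hy =>
      obtain ⟨q, hq, c, hc⟩ := hx
      obtain ⟨q', hq', c', hc'⟩ := hy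
      refine ⟨q * q', mul_ne_zero hq hq', (q' ⊗ₜ 1) * c + (q ⊗ₜ 1) * c', ?_⟩
      have h1 : ∀ (q : Polynomial K) c, φ ((q ⊗ₜ 1) * c) = algebraMap (Polynomial K) (RatFunc K) q • φ c := by
        intro q c
        rw [map_mul, Algebra.smul_def]
        simp [hφ]
      rw [map_add, h1, h1, ← hc, ← hc', smul_add, smul_smul, smul_smul, map_mul, mul_comm]
  rw [mem_nonZeroDivisors_iff_right]
  intro b hb
  obtain ⟨q, hq, c, hc⟩ := hclear b
  have h0 : φ (c * e P) = φ 0 := by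
    rw [map_mul, ← hc, smul_mul_assoc, hb, smul_zero, map_zero]
  have h1 := hφinj h0
  have h2 : e.symm c * P = 0 := by
    apply e.injective
    simpa using h1
  have h3 := (mem_nonZeroDivisors_iff_right.1 hPreg) _ h2
  have h4 : c = 0 := by simpa using h3
  rw [h4, map_zero] at hc
  exact (smul_eq_zero.1 hc).resolve_left (by simpa using hq)

theorem aux_dim {K R : Type*} [Field K] [CommRing R] [Algebra K R] [Algebra.FiniteType K R]
    (hdim : 2 ≤ ringKrullDim R) :
    ∃ g : MvPolynomial (Fin 2) K →ₐ[K] R, Function.Injective g := by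
  have : Nontrivial R := by
    by_contra h
    rw [not_nontrivial_iff_subsingleton] at h
    rw [ringKrullDim_eq_bot_of_subsingleton] at hdim
    simp at hdim
  obtain ⟨m, g, hg, hint⟩ := exists_integral_inj_algHom_of_fg K R
  have hle : ringKrullDim R ≤ ringKrullDim (MvPolynomial (Fin m) K) := by
    refine Order.krullDim_le_of_strictMono (PrimeSpectrum.comap g.toRingHom) ?_
    intro p q hpq
    algebraize [g.toRingHom]
    exact Ideal.IsIntegral.comap_lt_comap (R := MvPolynomial (Fin m) K) (A := R) hpq
  have hm : 2 ≤ m := by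
    have := hdim.trans hle
    rw [MvPolynomial.ringKrullDim_of_isNoetherianRing, ringKrullDim_eq_zero_of_field] at this
    simp at this
    exact_mod_cast this
  exact ⟨g.comp (rename (Fin.castLE hm)), hg.comp (rename_injective _ (Fin.castLE_injective hm))⟩

theorem aux_unbounded {K : Type*} [Field K] {s : ℕ} (I : Ideal (MvPolynomial (Fin s) K))
    (g : MvPolynomial (Fin 2) K →ₐ[K] MvPolynomial (Fin s) K ⧸ I) (hg : Function.Injective g)
    (V : Submodule K (MvPolynomial (Fin s) K ⧸ I))
    (hV : ∀ k, V ^ k = (homogeneousSubmodule (Fin s) K k).map (Ideal.Quotient.mkₐ K I).toLinearMap)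
    (C : ℕ) (hC : ∀ n, Module.finrank K ↥(V ^ n) ≤ C) : False := by
  obtain ⟨x, hx⟩ := Ideal.Quotient.mk_surjective (g (X 0))
  obtain ⟨y, hy⟩ := Ideal.Quotient.mk_surjective (g (X 1))
  set c := x.totalDegree + y.totalDegree with hc
  have fin : ∀ n, Module.Finite K ↥(V ^ n) := fun n => by
    rw [hV]
    exact Module.Finite.iff_fg.2 ((homogeneousSubmodule_fg (Fin s) K n).map _)
  set A : ℕ → Submodule K (MvPolynomial (Fin s) K ⧸ I) := fun d => (Finset.range (d + 1)).sup (fun k => V ^ k) with hAdef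
  have hA : ∀ d, Module.finrank K ↥(A d) ≤ (d + 1) * C := by
    intro d
    have hgen : ∀ m, Module.finrank K ↥((Finset.range m).sup (fun k => V ^ k)) ≤ m * C := by
      intro m
      induction m with
      | zero =>
        rw [Finset.range_zero, Finset.sup_empty, finrank_bot]
        exact Nat.zero_le _
      | succ m ih =>
        rw [Finset.range_add_one, Finset.sup_insert]
        refine (Submodule.finrank_add_le_finrank_add_finrank _ _).trans ?_
        have := hC m
        rw [add_mul, one_mul]
        omega
    exact hgen (d + 1)
  have hmem : ∀ d (p : MvPolynomial (Fin s) K), p.totalDegree ≤ d → Ideal.Quotient.mk I p ∈ A d := by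
    intro d p hp
    rw [← p.sum_homogeneousComponent, map_sum]
    refine Submodule.sum_mem _ fun k hk => ?_
    have hk' : k < d + 1 := by have := Finset.mem_range.1 hk; omega
    refine Finset.le_sup (f := fun k => V ^ k) (Finset.mem_range.2 hk') ?_
    change _ ∈ V ^ k
    rw [hV]
    exact Submodule.mem_map_of_mem (homogeneousComponent_mem k p)
  have hcount : ∀ n, n * n ≤ (n * c + 1) * C := by
    intro n
    set v : Fin n × Fin n → A (n * c) := fun ab =>
      ⟨g (X 0 ^ (ab.1 : ℕ) * X 1 ^ (ab.2 : ℕ)), by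
        rw [map_mul, map_pow, map_pow, ← hx, ← hy, ← map_pow, ← map_pow, ← map_mul]
        apply hmem
        refine (totalDegree_mul _ _).trans ?_
        have h1 := totalDegree_pow x ab.1
        have h2 := totalDegree_pow y ab.2
        have h3 : (ab.1 : ℕ) * x.totalDegree ≤ n * x.totalDegree := Nat.mul_le_mul_right _ ab.1.2.le
        have h4 : (ab.2 : ℕ) * y.totalDegree ≤ n * y.totalDegree := Nat.mul_le_mul_right _ ab.2.2.le
        rw [hc, mul_add]
        omega⟩
    have hv : LinearIndependent K v := by
      apply LinearIndependent.of_comp (A (n * c)).subtype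
      have h1 : LinearIndependent K (fun ab : Fin n × Fin n =>
          (X 0 ^ (ab.1 : ℕ) * X 1 ^ (ab.2 : ℕ) : MvPolynomial (Fin 2) K)) := by
        have := (basisMonomials (Fin 2) K).linearIndependent.comp
          (fun ab : Fin n × Fin n => Finsupp.single 0 (ab.1 : ℕ) + Finsupp.single 1 (ab.2 : ℕ)) ?_
        · have hfun : (fun ab : Fin n × Fin n =>
              (X 0 ^ (ab.1 : ℕ) * X 1 ^ (ab.2 : ℕ) : MvPolynomial (Fin 2) K)) =
              (basisMonomials (Fin 2) K) ∘ fun ab : Fin n × Fin n =>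
                Finsupp.single 0 (ab.1 : ℕ) + Finsupp.single 1 (ab.2 : ℕ) := by
            ext1 ab
            simp [X_pow_eq_monomial, monomial_mul]
          rw [hfun]
          exact this
        · rintro ⟨a, b⟩ ⟨a', b'⟩ h
          have h0 := DFunLike.congr_fun h 0
          have h1 := DFunLike.congr_fun h 1
          simp at h0 h1
          ext <;> simp [h0, h1]
      exact h1.map' g.toLinearMap (LinearMap.ker_eq_bot.2 hg)
    have : Module.Finite K ↥(A (n * c)) := inferInstance
    have := hv.fintype_card_le_finrank
    simp at this
    exact this.trans (hA _)
  have h := hcount (c * C + C + 1)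
  obtain ⟨n, hn⟩ : ∃ n, n = c * C + C + 1 := ⟨_, rfl⟩
  rw [← hn] at h
  have h1 : n * n = n * c * C + n * C + n := by
    nth_rewrite 2 [hn]
    ring
  have h2 : C ≤ n * C := Nat.le_mul_of_pos_left _ (by omega)
  have h3 : (n * c + 1) * C = n * c * C + C := by ring
  omega

theorem aux_growth {K R : Type*} [Field K] [CommRing R] [Algebra K R] {s : ℕ} (t : Fin s → R)
    (hann : ∀ r : R, (∀ j, r * t j = 0) → r = 0) (V : Submodule K R)
    (hV : V = Submodule.span K (Set.range t)) (k : ℕ) :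
    Module.finrank K ↥(V ^ k) ≤ Module.finrank K ↥(V ^ (k + 1)) ∧
    (Module.finrank K ↥(V ^ k) = Module.finrank K ↥(V ^ (k + 1)) →
      ∀ n, Module.finrank K ↥(V ^ (k + n)) = Module.finrank K ↥(V ^ k)) := by
  have hreg := aux_regular (K := K) t hann
  set ι : R →ₐ[K] TensorProduct K (RatFunc K) R :=
    Algebra.TensorProduct.includeRight with hι
  set U := Submodule.span (RatFunc K) (ι '' Set.range t) with hU
  have hUfin : U.FG := Submodule.fg_span ((Set.finite_range t).image _)
  have hfr : ∀ k, Module.finrank K ↥(V ^ k) = Module.finrank (RatFunc K) ↥(U ^ k) := by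
    intro k
    rw [hU, hι, ← aux_baseChange_pow, ← hV, ← Module.finrank_baseChange (R := RatFunc K)]
    exact (Submodule.toBaseChange.toLinearEquiv (RatFunc K) (V ^ k)).finrank_eq
  have hL : (∑ j : Fin s, TensorProduct.tmul K
      (algebraMap (Polynomial K) (RatFunc K) (Polynomial.X ^ (j : ℕ))) (t j)) ∈ U := by
    refine Submodule.sum_mem _ fun j _ => ?_
    have h1 : ι (t j) ∈ U := Submodule.subset_span ⟨t j, ⟨j, rfl⟩, rfl⟩
    have h2 := U.smul_mem (algebraMap (Polynomial K) (RatFunc K) (Polynomial.X ^ (j : ℕ))) h1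
    rw [hι, Algebra.TensorProduct.includeRight_apply, TensorProduct.smul_tmul', smul_eq_mul,
      mul_one] at h2
    exact h2
  simp only [hfr]
  exact aux_mul U hUfin _ hL hreg k

/-- Proposition: let `S = K[t_1,…,t_s]` be graded by total degree and `I ⊆ S` a graded ideal.
If `dim S/I ≥ 2` and `depth S/I > 0` (with respect to the irrelevant maximal ideal
`(t_1,…,t_s)`, i.e. `(t_1,…,t_s)` contains a non-zerodivisor on `S/I`), then the Hilbert
function of `S/I` is strictly increasing: `H_I(i) < H_I(i+1)` for all `i ≥ 0`. -/
theorem hilbertFunction_strictMono_of_two_le_krullDim_of_pos_depth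
    (K : Type*) [Field K] {s : ℕ}
    (I : Ideal (MvPolynomial (Fin s) K))
    (hgraded : ∀ f ∈ I, ∀ d : ℕ, homogeneousComponent d f ∈ I)
    (hdim : 2 ≤ ringKrullDim (MvPolynomial (Fin s) K ⧸ I))
    (hdepth : ∃ f ∈ Ideal.span (Set.range (X : Fin s → MvPolynomial (Fin s) K)),
      Ideal.Quotient.mk I f ∈ nonZeroDivisors (MvPolynomial (Fin s) K ⧸ I)) :
    ∀ i : ℕ, hilbertFunction I i < hilbertFunction I (i + 1) := by
  classical
  set q := (Ideal.Quotient.mkₐ K I).toLinearMap with hq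
  set t : Fin s → MvPolynomial (Fin s) K ⧸ I := fun j => Ideal.Quotient.mk I (X j) with ht
  set V : Submodule K (MvPolynomial (Fin s) K ⧸ I) := Submodule.span K (Set.range t) with hVdef
  have hV : ∀ k, V ^ k = (homogeneousSubmodule (Fin s) K k).map q := by
    intro k
    have h1 : V = (homogeneousSubmodule (Fin s) K 1).map q := by
      rw [homogeneousSubmodule_one_eq_span_X, Submodule.map_span, ← Set.range_comp]
      rfl
    rw [h1, ← homogeneousSubmodule_one_pow (σ := Fin s) (R := K) k, hq, Submodule.map_pow]
  have hH : ∀ k, hilbertFunction I k = Module.finrank K ↥(V ^ k) := by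
    intro k
    rw [hV, hilbertFunction]
    have hker : Submodule.comap (homogeneousSubmodule (Fin s) K k).subtype
        (Submodule.restrictScalars K I) =
        LinearMap.ker (q ∘ₗ (homogeneousSubmodule (Fin s) K k).subtype) := by
      ext x
      simp [hq, Ideal.Quotient.eq_zero_iff_mem]
    rw [hker, (LinearMap.quotKerEquivRange _).finrank_eq, LinearMap.range_comp,
      Submodule.range_subtype]
  have hann : ∀ r : MvPolynomial (Fin s) K ⧸ I, (∀ j, r * t j = 0) → r = 0 := by
    intro r hr
    obtain ⟨f, hf, hreg⟩ := hdepth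
    refine (mem_nonZeroDivisors_iff_right.1 hreg) r ?_
    clear hreg
    induction hf using Submodule.span_induction with
    | mem x hx => obtain ⟨j, rfl⟩ := hx; exact hr j
    | zero => simp
    | add x y _ _ hx hy => rw [map_add, mul_add, hx, hy, add_zero]
    | smul a x _ hx => rw [smul_eq_mul, map_mul, mul_left_comm, hx, mul_zero]
  intro i
  have hmain := aux_growth t hann V hVdef
  obtain ⟨hle, heq⟩ := hmain i
  rw [hH i, hH (i + 1)]
  refine lt_of_le_of_ne hle fun h => ?_
  have hconst := heq h
  have hmono : Monotone (fun k => Module.finrank K ↥(V ^ k)) :=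
    monotone_nat_of_le_succ fun k => (hmain k).1
  obtain ⟨g, hg⟩ := aux_dim (K := K) hdim
  refine aux_unbounded I g hg V hV (Module.finrank K ↥(V ^ i)) fun n => ?_
  rw [← hconst n]
  exact hmono (Nat.le_add_left n i)
end

section
/- Let S = K[t_1,…,t_s] be a graded polynomial ring over a field and I ⊂ S a graded ideal with depth S/I = dim S/I = 1. Then there exists an integer r ≥ 0 such that 1 = H_I(0) < H_I(1) < ⋯ < H_I(r−1) < H_I(r), and H_I(i) = deg S/I for all i ≥ r; that is, the Hilbert function of S/I is strictly increasing until it reaches the constant value deg S/I. -/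
open MvPolynomial

open scoped TensorProduct

section A
variable {K R : Type*} [Field K] [CommRing R] [Algebra K R]

noncomputable def phiHF (K R : Type*) [Field K] [CommRing R] [Algebra K R] :
    Polynomial R →ₐ[K] FractionRing (Polynomial K) ⊗[K] R :=
  ((Algebra.TensorProduct.map (IsScalarTower.toAlgHom K (Polynomial K) (FractionRing (Polynomial K)))
    (AlgHom.id K R)).comp
    (Algebra.TensorProduct.comm K R (Polynomial K)).toAlgHom).comp (polyEquivTensor K R).toAlgHom

lemma phiHF_inj : Function.Injective (phiHF K R) := by
  have h1 : Function.Injective (Algebra.TensorProduct.map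
      (IsScalarTower.toAlgHom K (Polynomial K) (FractionRing (Polynomial K)))
      (AlgHom.id K R)) := by
    have := Module.Flat.rTensor_preserves_injective_linearMap (M := R)
      (IsScalarTower.toAlgHom K (Polynomial K) (FractionRing (Polynomial K))).toLinearMap
      (IsFractionRing.injective (Polynomial K) (FractionRing (Polynomial K)))
    exact this
  unfold phiHF
  exact (h1.comp (Algebra.TensorProduct.comm K R (Polynomial K)).injective).comp
    (polyEquivTensor K R).injective

lemma phiHF_apply (r : R) (q : Polynomial K) :
    phiHF K R (r • q.map (algebraMap K R)) = algebraMap _ (FractionRing (Polynomial K)) q ⊗ₜ r := by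
  rw [← polyEquivTensor_symm_apply_tmul_eq_smul]
  unfold phiHF
  simp [-polyEquivTensor_symm_apply_tmul_eq_smul, -polyEquivTensor_apply]

lemma phiHF_clear (z : FractionRing (Polynomial K) ⊗[K] R) :
    ∃ q : Polynomial K, q ≠ 0 ∧ ∃ p, (algebraMap _ (FractionRing (Polynomial K)) q) • z = phiHF K R p := by
  induction z with
  | zero => exact ⟨1, one_ne_zero, 0, by simp⟩
  | tmul a r =>
    obtain ⟨p, q, hq, rfl⟩ := IsFractionRing.div_surjective (A := Polynomial K) a
    have hq0 := nonZeroDivisors.ne_zero hq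
    refine ⟨q, hq0, r • p.map (algebraMap K R), ?_⟩
    rw [phiHF_apply, TensorProduct.smul_tmul', smul_eq_mul, mul_div_cancel₀]
    simpa using hq0
  | add x y hx hy =>
    obtain ⟨q, hq, p, hp⟩ := hx
    obtain ⟨q', hq', p', hp'⟩ := hy
    have key (q : Polynomial K) (z : FractionRing (Polynomial K) ⊗[K] R) :
        (algebraMap _ (FractionRing (Polynomial K)) q) • z
          = phiHF K R (q.map (algebraMap K R)) * z := by
      have := phiHF_apply (1 : R) q
      rw [one_smul] at this
      rw [this]
      induction z with
      | zero => simp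
      | add u v hu hv => rw [smul_add, mul_add, hu, hv]
      | tmul u v => rw [TensorProduct.smul_tmul', Algebra.TensorProduct.tmul_mul_tmul, one_mul, smul_eq_mul]
    refine ⟨q * q', mul_ne_zero hq hq', q'.map (algebraMap K R) * p + q.map (algebraMap K R) * p', ?_⟩
    rw [smul_add, map_add, map_mul (phiHF K R), map_mul (phiHF K R), ← hp, ← hp', ← key, ← key, map_mul,
      mul_smul, mul_smul]
    congr 1
    rw [smul_comm]

noncomputable def genL {s : ℕ} (K : Type*) [Field K] [Algebra K R] (t : Fin s → R) : FractionRing (Polynomial K) ⊗[K] R :=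
  ∑ i : Fin s, (algebraMap (Polynomial K) (FractionRing (Polynomial K)) (Polynomial.X ^ (i : ℕ))) ⊗ₜ[K] t i

lemma genL_nzd {s : ℕ} (t : Fin s → R) (h : ∀ r, (∀ i, r * t i = 0) → r = 0)
    (z : FractionRing (Polynomial K) ⊗[K] R) (hz : genL K t * z = 0) : z = 0 := by
  let P : Polynomial R := ∑ i : Fin s, t i • (Polynomial.X ^ (i : ℕ))
  have hP : phiHF K R P = genL K t := by
    simp only [P, map_sum, genL]
    refine Finset.sum_congr rfl fun i _ => ?_
    rw [← phiHF_apply]; simp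
  have hnz : P ∈ nonZeroDivisors (Polynomial R) := by
    rw [Polynomial.mem_nonZeroDivisors_iff]
    intro a ha
    refine h a fun j => ?_
    have := congrArg (fun p => Polynomial.coeff p (j : ℕ)) ha
    simpa [P, Polynomial.coeff_X_pow, Fin.val_inj] using this
  obtain ⟨q, hq, p, hp⟩ := phiHF_clear z
  have : phiHF K R (P * p) = 0 := by
    rw [map_mul, hP, ← hp, mul_smul_comm, hz, smul_zero]
  have h2 : P * p = 0 := phiHF_inj (by rw [this, map_zero])
  have h3 : p = 0 := hnz.1 _ h2
  rw [h3, map_zero] at hp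
  exact (smul_eq_zero_iff_right (by simpa using hq)).1 hp

lemma finrank_bc (W : Submodule K R) :
    Module.finrank (FractionRing (Polynomial K)) (W.baseChange (FractionRing (Polynomial K))) = Module.finrank K W := by
  rw [← (Submodule.toBaseChange.toLinearEquiv (FractionRing (Polynomial K)) W).finrank_eq,
    Module.finrank_baseChange]

lemma bc_mul {U W : Submodule K R} {x z : FractionRing (Polynomial K) ⊗[K] R}
    (hx : x ∈ U.baseChange (FractionRing (Polynomial K)))
    (hz : z ∈ W.baseChange (FractionRing (Polynomial K))) :
    x * z ∈ (U * W).baseChange (FractionRing (Polynomial K)) := by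
  obtain ⟨x, rfl⟩ := hx
  obtain ⟨z, rfl⟩ := hz
  induction x with
  | zero => simp
  | add a b ha hb => rw [map_add, add_mul]; exact add_mem ha hb
  | tmul a u =>
    induction z with
    | zero => simp
    | add a b ha hb => rw [map_add, mul_add]; exact add_mem ha hb
    | tmul b w =>
      simp only [LinearMap.baseChange_tmul, Submodule.subtype_apply,
        Algebra.TensorProduct.tmul_mul_tmul]
      exact Submodule.tmul_mem_baseChange_of_mem _ (Submodule.mul_mem_mul u.2 w.2)

lemma growth {s : ℕ} (t : Fin s → R) (h : ∀ r, (∀ i, r * t i = 0) → r = 0)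
    (U : Submodule K R) (hU : U = Submodule.span K (Set.range t)) (d : ℕ) :
    Module.finrank K ↥(U ^ d) ≤ Module.finrank K ↥(U ^ (d + 1)) ∧
    (Module.finrank K ↥(U ^ d) = Module.finrank K ↥(U ^ (d + 1)) →
      Module.finrank K ↥(U ^ (d + 2)) ≤ Module.finrank K ↥(U ^ (d + 1))) := by
  set F := FractionRing (Polynomial K)
  have hUfg : U.FG := hU ▸ Submodule.fg_span (Set.finite_range t)
  have hfin (d : ℕ) : Module.Finite K ↥(U ^ d) := Module.Finite.iff_fg.2 (hUfg.pow d)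
  let B (d : ℕ) : Submodule F (F ⊗[K] R) := (U ^ d).baseChange F
  have hB (d : ℕ) : Module.finrank F (B d) = Module.finrank K ↥(U ^ d) := finrank_bc _
  have hBfin (d : ℕ) : Module.Finite F (B d) :=
    Module.Finite.of_surjective _ (Submodule.toBaseChange_surjective F (U ^ d))
  have hL : genL K t ∈ U.baseChange F := by
    refine Submodule.sum_mem _ fun i _ => Submodule.tmul_mem_baseChange_of_mem _ ?_
    rw [hU]; exact Submodule.subset_span (Set.mem_range_self i)
  let m : F ⊗[K] R →ₗ[F] F ⊗[K] R := LinearMap.mulLeft F (genL K t)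
  have hm : Function.Injective m := by
    rw [injective_iff_map_eq_zero]
    exact fun z hz => genL_nzd t h z hz
  have hmap (d : ℕ) : (B d).map m ≤ B (d + 1) := by
    rintro _ ⟨z, hz, rfl⟩
    have := bc_mul (W := U ^ d) hL hz
    rwa [← pow_succ'] at this
  have hr (d : ℕ) : Module.finrank F ((B d).map m) = Module.finrank F (B d) :=
    ((B d).equivMapOfInjective m hm).finrank_eq.symm
  constructor
  · rw [← hB, ← hB, ← hr]
    exact Submodule.finrank_mono (hmap d)
  · intro he
    have heq : (B d).map m = B (d + 1) :=
      Submodule.eq_of_le_of_finrank_eq (hmap d) (by rw [hr, hB, hB, he])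
    rw [← hB, ← hB (d + 1), ← hr (d + 1)]
    refine Submodule.finrank_mono ?_
    show (U ^ (d + 2)).baseChange F ≤ _
    rw [Submodule.baseChange_eq_span, Submodule.span_le]
    rintro _ ⟨z, hz, rfl⟩
    replace hz : z ∈ U * U ^ (d + 1) := by rw [← pow_succ']; exact hz
    show (1 : F) ⊗ₜ[K] z ∈ (B (d + 1)).map m
    induction hz using Submodule.mul_induction_on' with
    | mem_mul_mem u hu y hy =>
      have hy' : (1 : F) ⊗ₜ[K] y ∈ (B d).map m := heq ▸ Submodule.tmul_mem_baseChange_of_mem _ hy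
      obtain ⟨w, hw, hwy⟩ := hy'
      refine ⟨(1 ⊗ₜ u) * w, ?_, ?_⟩
      · have := bc_mul (Submodule.tmul_mem_baseChange_of_mem (1 : F) hu) hw
        rwa [← pow_succ'] at this
      · have : (1 : F) ⊗ₜ[K] (u * y) = (1 ⊗ₜ u) * (1 ⊗ₜ y) := by simp
        rw [this, ← hwy]
        simp only [m, LinearMap.mulLeft_apply]
        ring
    | add x hx y hy h1 h2 => rw [TensorProduct.tmul_add]; exact add_mem h1 h2

end A
open scoped Pointwise
section B
variable {K R : Type*} [Field K] [CommRing R] [Algebra K R]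

lemma HFmulr {A B C : Submodule K R} (h : B ≤ C) : A * B ≤ A * C := mul_le_mul' le_rfl h
lemma HFmull {A B C : Submodule K R} (h : B ≤ C) : B * A ≤ C * A := mul_le_mul' h le_rfl

lemma linear_growth (g : Polynomial K →ₐ[K] R) (hg : g.Finite) (U : Submodule K R) (hU : U.FG) :
    ∃ (C : ℕ) (V : ℕ → Submodule K R), Monotone V ∧ (∀ n, Module.Finite K (V n)) ∧
      (∀ n, Module.finrank K (V n) ≤ C * (n + 1)) ∧ ∀ n, U ^ n ≤ V n := by
  classical
  let x := g Polynomial.X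
  let Q (n : ℕ) : Submodule K R := Submodule.span K ((Finset.range (n + 1)).image (x ^ ·) : Finset R)
  have hQmono : Monotone Q := fun a b hab => Submodule.span_mono (by
    simp only [Finset.coe_image]
    refine Set.image_mono ?_
    intro i hi; simp at hi ⊢; omega)
  have hQmul (a b : ℕ) : Q a * Q b ≤ Q (a + b) := by
    simp only [Q, Submodule.span_mul_span]
    refine Submodule.span_mono ?_
    rintro _ ⟨_, hu, _, hv, rfl⟩
    simp only [Finset.coe_image, Set.mem_image, Finset.mem_coe, Finset.mem_range] at hu hv ⊢
    obtain ⟨i, hi, rfl⟩ := hu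
    obtain ⟨j, hj, rfl⟩ := hv
    exact ⟨i + j, by omega, pow_add _ _ _⟩
  obtain ⟨G, hG⟩ : ∃ G : Finset R, ∀ r, ∃ n, r ∈ Submodule.span K (G : Set R) * Q n := by
    let _ := g.toRingHom.toAlgebra
    have : Module.Finite (Polynomial K) R := hg
    obtain ⟨G, hG⟩ := this.fg_top
    refine ⟨G, fun r => ?_⟩
    have hr : r ∈ Submodule.span (Polynomial K) (G : Set R) := hG ▸ Submodule.mem_top
    induction hr using Submodule.span_induction with
    | zero => exact ⟨0, zero_mem _⟩
    | mem y hy =>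
      refine ⟨0, ?_⟩
      rw [← mul_one y]
      refine Submodule.mul_mem_mul (Submodule.subset_span hy) (Submodule.subset_span ?_)
      simp
    | add y z _ _ hy hz =>
      obtain ⟨a, ha⟩ := hy
      obtain ⟨b, hb⟩ := hz
      exact ⟨max a b, add_mem (HFmulr (hQmono (le_max_left _ _)) ha)
        (HFmulr (hQmono (le_max_right _ _)) hb)⟩
    | smul p y _ hy =>
      obtain ⟨a, ha⟩ := hy
      refine ⟨a + p.natDegree, ?_⟩
      have hp : g p ∈ Q p.natDegree := by
        rw [congrArg g (Polynomial.as_sum_range_C_mul_X_pow p), map_sum]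
        refine Submodule.sum_mem _ fun i hi => ?_
        rw [map_mul, map_pow, ← Polynomial.algebraMap_eq, AlgHom.commutes, ← Algebra.smul_def]
        refine Submodule.smul_mem _ _ (Submodule.subset_span ?_)
        rw [Finset.mem_coe, Finset.mem_image]
        exact ⟨i, hi, rfl⟩
      have : p • y = y * g p := by rw [Algebra.smul_def, mul_comm]; rfl
      rw [this]
      have := Submodule.mul_mem_mul ha hp
      rw [mul_assoc] at this
      exact HFmulr (hQmul _ _) this
  set F := Submodule.span K (G : Set R) with hF
  have hFG (W : Submodule K R) (hW : W.FG) : ∃ n, W ≤ F * Q n := by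
    obtain ⟨S, rfl⟩ := hW
    choose N hN using hG
    refine ⟨S.sup N, Submodule.span_le.2 fun y hy => ?_⟩
    exact HFmulr (hQmono (Finset.le_sup hy)) (hN y)
  obtain ⟨c, hc⟩ := hFG 1 ⟨{1}, by rw [Submodule.one_eq_span]; simp⟩
  obtain ⟨D, hD⟩ := hFG (U * F) (hU.mul ⟨G, rfl⟩)
  have hspan (n : ℕ) : F * Q n = Submodule.span K
      ((G * (Finset.range (n + 1)).image (x ^ ·) : Finset R) : Set R) := by
    rw [hF, Submodule.span_mul_span, Finset.coe_mul]
  refine ⟨G.card * (D + c + 1), fun n => F * Q (D * n + c), ?_, ?_, ?_, ?_⟩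
  · intro a b hab
    exact HFmulr (hQmono (by gcongr))
  · intro n
    rw [Module.Finite.iff_fg]
    simp only [hspan]
    exact ⟨_, rfl⟩
  · intro n
    show Module.finrank K ↥(F * Q (D * n + c)) ≤ _
    rw [hspan]
    refine (finrank_span_finset_le_card _).trans ?_
    refine Finset.card_mul_le.trans ?_
    rw [mul_assoc]
    gcongr
    refine Finset.card_image_le.trans ?_
    rw [Finset.card_range]
    nlinarith
  · intro n
    induction n with
    | zero => simpa using hc
    | succ n ih =>
      rw [pow_succ']
      calc U * U ^ n ≤ U * (F * Q (D * n + c)) := HFmulr ih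
        _ = (U * F) * Q (D * n + c) := (mul_assoc _ _ _).symm
        _ ≤ (F * Q D) * Q (D * n + c) := HFmull hD
        _ = F * (Q D * Q (D * n + c)) := mul_assoc _ _ _
        _ ≤ F * Q (D + (D * n + c)) := HFmulr (hQmul _ _)
        _ = F * Q (D * (n + 1) + c) := by congr 2; ring

/-- A one-dimensional finitely generated algebra is finite over a polynomial ring in one variable. -/
lemma exists_finite_poly [Algebra.FiniteType K R] (hdim : ringKrullDim R = 1) :
    ∃ g : Polynomial K →ₐ[K] R, g.Finite := by
  have : Nontrivial R := by
    by_contra h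
    rw [not_nontrivial_iff_subsingleton] at h
    rw [ringKrullDim_eq_bot_of_subsingleton] at hdim
    exact absurd hdim (by decide)
  obtain ⟨m, g, hinj, hfin⟩ := exists_finite_inj_algHom_of_fg K R
  have hm : m ≤ 1 := by
    have h1 : ringKrullDim (MvPolynomial (Fin m) K) ≤ ringKrullDim R := by
      let _ := g.toRingHom.toAlgebra
      have : Module.Finite (MvPolynomial (Fin m) K) R := hfin
      have : FaithfulSMul (MvPolynomial (Fin m) K) R :=
        (faithfulSMul_iff_algebraMap_injective _ _).2 hinj
      refine iSup_le fun l => ?_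
      obtain ⟨⟨P, hP, hPl⟩⟩ := Ideal.nonempty_primesOver (S := R) (RelSeries.head l).asIdeal
      obtain ⟨L, hL, -⟩ := Ideal.exists_ltSeries_of_hasGoingUp l P
      rw [← hL]
      exact le_iSup (fun p : LTSeries (PrimeSpectrum R) => (p.length : WithBot ℕ∞)) L
    rw [MvPolynomial.ringKrullDim_of_isNoetherianRing, hdim, ringKrullDim_eq_zero_of_field] at h1
    simp at h1
    exact_mod_cast h1
  obtain ⟨f, hf⟩ : ∃ f : Polynomial K →ₐ[K] MvPolynomial (Fin m) K, Function.Surjective f := by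
    have : Subsingleton (Fin m) := by
      interval_cases m <;> infer_instance
    by_cases h0 : Nonempty (Fin m)
    · obtain ⟨i⟩ := h0
      refine ⟨Polynomial.aeval (X i), ?_⟩
      rw [← AlgHom.range_eq_top, eq_top_iff, ← MvPolynomial.adjoin_range_X, Algebra.adjoin_le_iff]
      rintro _ ⟨j, rfl⟩
      exact ⟨Polynomial.X, by simp [Subsingleton.elim j i]⟩
    · rw [not_nonempty_iff] at h0
      refine ⟨Polynomial.aeval 0, ?_⟩
      rw [← AlgHom.range_eq_top, eq_top_iff, ← MvPolynomial.adjoin_range_X, Algebra.adjoin_le_iff]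
      rintro _ ⟨j, rfl⟩
      exact h0.elim j
  exact ⟨g.comp f, hfin.comp (AlgHom.Finite.of_surjective f hf)⟩
end B
lemma finrank_pow_zero {K R : Type*} [Field K] [CommRing R] [Algebra K R] [Nontrivial R]
    (U : Submodule K R) : Module.finrank K ↥(U ^ 0) = 1 := by
  rw [pow_zero, Submodule.one_eq_span]
  exact finrank_span_singleton one_ne_zero

section C
variable {K : Type*} [Field K] {s : ℕ}

lemma hf_eq (I : Ideal (MvPolynomial (Fin s) K)) (d : ℕ) :
    hilbertFunction I d = Module.finrank K
      ↥((homogeneousSubmodule (Fin s) K d).map (Ideal.Quotient.mkₐ K I).toLinearMap) := by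
  set H := homogeneousSubmodule (Fin s) K d
  let f : H →ₗ[K] (MvPolynomial (Fin s) K ⧸ I) := (Ideal.Quotient.mkₐ K I).toLinearMap ∘ₗ H.subtype
  have hk : LinearMap.ker f =
      Submodule.comap H.subtype (Submodule.restrictScalars K I) := by
    ext x
    simp only [f, LinearMap.mem_ker, LinearMap.comp_apply, Submodule.mem_comap,
      Submodule.restrictScalars_mem]
    exact Ideal.Quotient.eq_zero_iff_mem
  have hr : LinearMap.range f = H.map (Ideal.Quotient.mkₐ K I).toLinearMap := by
    rw [LinearMap.range_comp, Submodule.range_subtype]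
  unfold hilbertFunction
  rw [← hr, ← f.quotKerEquivRange.finrank_eq, hk]

lemma map_hom_eq (I : Ideal (MvPolynomial (Fin s) K)) (d : ℕ) :
    (homogeneousSubmodule (Fin s) K d).map (Ideal.Quotient.mkₐ K I).toLinearMap =
      (Submodule.span K (Set.range fun i => Ideal.Quotient.mk I (X i))) ^ d := by
  rw [← homogeneousSubmodule_one_pow, Submodule.map_pow, homogeneousSubmodule_one_eq_span_X,
    Submodule.map_span, ← Set.range_comp]
  rfl

/-- Graded pieces are independent: the pieces of degree `≤ n` are disjoint from that of
degree `n + 1`. -/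
lemma piece_disjoint (I : Ideal (MvPolynomial (Fin s) K))
    (hgraded : ∀ f ∈ I, ∀ d : ℕ, homogeneousComponent d f ∈ I) (n : ℕ) :
    Disjoint (⨆ i ∈ Finset.range (n + 1),
        (homogeneousSubmodule (Fin s) K i).map (Ideal.Quotient.mkₐ K I).toLinearMap)
      ((homogeneousSubmodule (Fin s) K (n + 1)).map (Ideal.Quotient.mkₐ K I).toLinearMap) := by
  rw [Submodule.disjoint_def]
  intro z hz hz'
  have h1 : (⨆ i ∈ Finset.range (n + 1),
        (homogeneousSubmodule (Fin s) K i).map (Ideal.Quotient.mkₐ K I).toLinearMap) ≤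
      (LinearMap.ker (homogeneousComponent (σ := Fin s) (R := K) (n + 1))).map
        (Ideal.Quotient.mkₐ K I).toLinearMap := by
    refine iSup₂_le fun i hi => Submodule.map_mono fun p hp => ?_
    rw [LinearMap.mem_ker, homogeneousComponent_of_mem hp, if_neg]
    simp at hi; omega
  obtain ⟨a, ha, rfl⟩ := h1 hz
  obtain ⟨b, hb, hab⟩ := hz'
  have hab' : b - a ∈ I := Ideal.Quotient.eq.1 hab
  have := hgraded _ hab' (n + 1)
  rw [map_sub, LinearMap.mem_ker.1 ha, sub_zero, homogeneousComponent_of_mem hb, if_pos rfl] at this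
  rw [← hab]
  exact Ideal.Quotient.eq_zero_iff_mem.2 this

end C

theorem hilbertFunction_strictMono_then_constant_of_dim_one
    (K : Type*) [Field K] {s : ℕ}
    (I : Ideal (MvPolynomial (Fin s) K))
    (hgraded : ∀ f ∈ I, ∀ d : ℕ, homogeneousComponent d f ∈ I)
    (hdim : ringKrullDim (MvPolynomial (Fin s) K ⧸ I) = 1)
    (hdepth : ∃ f ∈ Ideal.span (Set.range (X : Fin s → MvPolynomial (Fin s) K)),
      Ideal.Quotient.mk I f ∈ nonZeroDivisors (MvPolynomial (Fin s) K ⧸ I)) :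
    ∃ r : ℕ, hilbertFunction I 0 = 1 ∧
      (∀ i < r, hilbertFunction I i < hilbertFunction I (i + 1)) ∧
      (∀ i ≥ r, hilbertFunction I i = hilbertFunction I r) := by
  classical
  set R := MvPolynomial (Fin s) K ⧸ I with hR
  have hnt : Nontrivial R := by
    by_contra h
    rw [not_nontrivial_iff_subsingleton] at h
    rw [ringKrullDim_eq_bot_of_subsingleton] at hdim
    exact absurd hdim (by decide)
  let t : Fin s → R := fun i => Ideal.Quotient.mk I (X i)
  obtain ⟨U, hU⟩ : ∃ U : Submodule K R, U = Submodule.span K (Set.range t) := ⟨_, rfl⟩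
  have hUfg : U.FG := hU ▸ Submodule.fg_span (Set.finite_range t)
  have hfin (d : ℕ) : Module.Finite K ↥(U ^ d) := Module.Finite.iff_fg.2 (hUfg.pow d)
  have hmap (d : ℕ) : (homogeneousSubmodule (Fin s) K d).map (Ideal.Quotient.mkₐ K I).toLinearMap
      = U ^ d := by rw [hU]; exact map_hom_eq I d
  have hH (d : ℕ) : hilbertFunction I d = Module.finrank K ↥(U ^ d) := by
    rw [hf_eq, hmap]
  have hann : ∀ r : R, (∀ i, r * t i = 0) → r = 0 := by
    intro r hr
    obtain ⟨f, hf, hnz⟩ := hdepth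
    refine hnz.2 r ?_
    clear hnz
    induction hf using Submodule.span_induction with
    | zero => simp
    | mem y hy => obtain ⟨i, rfl⟩ := hy; exact hr i
    | add y z _ _ hy hz => rw [map_add, mul_add, hy, hz, add_zero]
    | smul a y _ hy => rw [smul_eq_mul, map_mul, mul_left_comm, hy, mul_zero]
  have hgrow := growth t hann U hU
  simp only [← hH] at hgrow
  have h0 : hilbertFunction I 0 = 1 := by
    rw [hH]
    exact finrank_pow_zero U
  have hex : ∃ r, hilbertFunction I r = hilbertFunction I (r + 1) := by
    by_contra! hne
    have hlt (d : ℕ) : hilbertFunction I d < hilbertFunction I (d + 1) :=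
      lt_of_le_of_ne (hgrow d).1 (hne d)
    have hge (d : ℕ) : d ≤ hilbertFunction I d := by
      induction d with
      | zero => omega
      | succ d ih => have := hlt d; omega
    obtain ⟨g, hg⟩ := exists_finite_poly (K := K) hdim
    obtain ⟨C, V, hVm, hVf, hVr, hUV⟩ := linear_growth g hg U hUfg
    let W (n : ℕ) : Submodule K R := ⨆ i ∈ Finset.range (n + 1), U ^ i
    have hWV (n : ℕ) : W n ≤ V n := by
      refine iSup₂_le fun i hi => (hUV i).trans (hVm ?_)
      simp at hi; omega
    have hWfin (n : ℕ) : Module.Finite K (W n) := 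
      Submodule.finiteDimensional_of_le (hWV n)
    have hWr (n : ℕ) : n * (n + 1) ≤ 2 * Module.finrank K (W n) := by
      induction n with
      | zero => simp
      | succ n ih =>
        have hd : Disjoint (W n) (U ^ (n + 1)) := by
          have := piece_disjoint I hgraded n
          simp only [hmap] at this
          exact this
        have hle : W n ⊔ U ^ (n + 1) ≤ W (n + 1) := by
          refine sup_le (iSup₂_le fun i hi => ?_) ?_
          · refine le_iSup₂_of_le i ?_ le_rfl
            simp at hi ⊢; omega
          · exact le_iSup₂_of_le (n + 1) (by simp) le_rfl
        have h1 := Submodule.finrank_mono hle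
        have h2 := Submodule.finrank_sup_add_finrank_inf_eq (W n) (U ^ (n + 1))
        rw [hd.eq_bot, finrank_bot, ← hH] at h2
        have h3 := hge (n + 1)
        nlinarith
    have h1 := hWr (2 * C + 1)
    have h2 := (Submodule.finrank_mono (hWV (2 * C + 1))).trans (hVr (2 * C + 1))
    nlinarith
  refine ⟨Nat.find hex, h0, fun i hi => lt_of_le_of_ne (hgrow i).1 (Nat.find_min hex hi), ?_⟩
  have hstab : ∀ k, hilbertFunction I (Nat.find hex + k) = hilbertFunction I (Nat.find hex + k + 1) := by
    intro k
    induction k with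
    | zero => exact Nat.find_spec hex
    | succ k ih =>
      exact le_antisymm (hgrow _).1 ((hgrow _).2 ih)
  intro i hi
  obtain ⟨k, rfl⟩ := Nat.exists_eq_add_of_le hi
  clear hi
  induction k with
  | zero => rfl
  | succ k ih => rw [← ih, hstab k]; rfl
end

section
/- Let L ⊂ S be a graded lattice ideal of dimension 1 with defining homogeneous lattice 𝓛 of rank s−1. Then there exist positive integers n_1, …, n_{s−1} such that: (a) the complete intersection ideal L' = (t_1^{n_1} − t_s^{n_1}, …, t_{s−1}^{n_{s−1}} − t_s^{n_{s−1}}) is contained in L; (b) the index of regularity of S/(t_s, L) is at most the index of regularity of S/(t_s, L'), which equals Σ_{i=1}^{s−1}(n_i − 1) + 1; and (c) H_L(d) = H_L(d−1) = deg S/L for every d ≥ Σ_{i=1}^{s−1}(n_i − 1) + 1. -/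
open MvPolynomial

/-- The index of regularity `reg(S/I)`: the least `r ≥ 0` such that the Hilbert polynomial
`h_I` agrees with the Hilbert function `H_I` at every `d ≥ r` (a polynomial agreeing with
`H_I` on all of `[r, ∞)` is necessarily the Hilbert polynomial). -/
noncomputable def indexOfRegularity {K : Type*} [Field K] {s : ℕ}
    (I : Ideal (MvPolynomial (Fin s) K)) : ℕ :=
  sInf {r : ℕ | ∃ h : Polynomial ℚ, ∀ d : ℕ, r ≤ d →
    Polynomial.eval (d : ℚ) h = hilbertFunction I d}

lemma mono_eq_prod {K : Type*} [Field K] {s : ℕ} (a : Fin s →₀ ℕ) :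
    (monomial a (1 : K) : MvPolynomial (Fin s) K) = ∏ i, X i ^ a i := by
  rw [monomial_eq, C_1, one_mul, Finsupp.prod_fintype]
  simp

lemma mono_sub_mem {K : Type*} [Field K] {s : ℕ} (L : AddSubgroup (Fin s → ℤ))
    (a b : Fin s →₀ ℕ) (h : (fun i => (a i : ℤ) - (b i : ℤ)) ∈ L) :
    (monomial a (1 : K) - monomial b 1 : MvPolynomial (Fin s) K) ∈ latticeIdeal K L := by
  have key : (monomial a (1 : K) - monomial b 1 : MvPolynomial (Fin s) K) =
      (∏ i, X i ^ (min (a i) (b i))) *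
        latticeBinomial K (fun i => (a i : ℤ) - (b i : ℤ)) := by
    rw [latticeBinomial, mul_sub, ← Finset.prod_mul_distrib, ← Finset.prod_mul_distrib,
      mono_eq_prod, mono_eq_prod]
    simp_rw [← pow_add]
    congr 1 <;> refine Finset.prod_congr rfl fun i _ => ?_ <;> congr 1 <;> omega
  rw [key]
  exact Ideal.mul_mem_left _ _ (Ideal.subset_span ⟨_, h, rfl⟩)

/-- The canonical map to the group algebra of the quotient. -/
noncomputable def toGrp (K : Type*) [Field K] {s : ℕ} (L : AddSubgroup (Fin s → ℤ)) :
    MvPolynomial (Fin s) K →ₐ[K] AddMonoidAlgebra K ((Fin s → ℤ) ⧸ L) :=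
  aeval fun i => AddMonoidAlgebra.single (QuotientAddGroup.mk (Pi.single i 1)) 1

lemma prod_single {K : Type*} [Field K] {s : ℕ} (L : AddSubgroup (Fin s → ℤ)) (a : Fin s → ℕ) :
    (∏ i, (AddMonoidAlgebra.single (QuotientAddGroup.mk (Pi.single i 1) : (Fin s → ℤ) ⧸ L)
      (1 : K)) ^ a i) =
      AddMonoidAlgebra.single (QuotientAddGroup.mk (fun i => (a i : ℤ))) 1 := by
  have h1 : ∀ (t : Finset (Fin s)), (∏ i ∈ t,
      (AddMonoidAlgebra.single (QuotientAddGroup.mk (Pi.single i 1) : (Fin s → ℤ) ⧸ L)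
      (1 : K)) ^ a i) =
      AddMonoidAlgebra.single (QuotientAddGroup.mk (∑ i ∈ t, a i • (Pi.single i 1 : Fin s → ℤ))) 1 := by
    intro t
    induction t using Finset.induction_on with
    | empty => simp [AddMonoidAlgebra.one_def]
    | insert i t hi ih =>
      rw [Finset.prod_insert hi, Finset.sum_insert hi, ih, AddMonoidAlgebra.single_pow,
        AddMonoidAlgebra.single_mul_single]
      simp
  rw [h1]
  congr 2
  ext j
  simp [Finset.sum_apply, Pi.single_apply]

lemma toGrp_monomial {K : Type*} [Field K] {s : ℕ} (L : AddSubgroup (Fin s → ℤ))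
    (a : Fin s →₀ ℕ) : toGrp K L (monomial a 1) =
      AddMonoidAlgebra.single (QuotientAddGroup.mk (fun i => (a i : ℤ))) 1 := by
  rw [← prod_single, mono_eq_prod, map_prod]
  simp [toGrp]

lemma latticeIdeal_le {K : Type*} [Field K] {s : ℕ} (L : AddSubgroup (Fin s → ℤ)) :
    latticeIdeal K L ≤ RingHom.ker (toGrp K L) := by
  refine Ideal.span_le.2 ?_
  rintro f ⟨a, ha, rfl⟩
  simp only [SetLike.mem_coe, RingHom.mem_ker, latticeBinomial, map_sub, map_prod, map_pow]
  simp only [toGrp, aeval_X, prod_single]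
  rw [sub_eq_zero]
  congr 1
  rw [QuotientAddGroup.eq]
  convert L.neg_mem ha using 1
  ext i
  simp only [Pi.add_apply, Pi.neg_apply]
  omega

open Classical in
lemma mem_latticeIdeal_of_toGrp {K : Type*} [Field K] {s : ℕ} (L : AddSubgroup (Fin s → ℤ))
    (f : MvPolynomial (Fin s) K) (hf : toGrp K L f = 0) : f ∈ latticeIdeal K L := by
  let rep : ((Fin s → ℤ) ⧸ L) → (Fin s →₀ ℕ) := fun g =>
    if h : ∃ a : Fin s →₀ ℕ, (QuotientAddGroup.mk (fun i => (a i : ℤ)) : (Fin s → ℤ) ⧸ L) = g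
    then h.choose else 0
  have hrep : ∀ a : Fin s →₀ ℕ, (QuotientAddGroup.mk (fun i =>
      (rep (QuotientAddGroup.mk (fun i => (a i : ℤ))) i : ℤ)) : (Fin s → ℤ) ⧸ L) =
      QuotientAddGroup.mk (fun i => (a i : ℤ)) := by
    intro a
    have h : ∃ b : Fin s →₀ ℕ, (QuotientAddGroup.mk (fun i => (b i : ℤ)) : (Fin s → ℤ) ⧸ L) =
      QuotientAddGroup.mk (fun i => (a i : ℤ)) := ⟨a, rfl⟩
    simp only [rep, dif_pos h]
    exact h.choose_spec
  let ψ : AddMonoidAlgebra K ((Fin s → ℤ) ⧸ L) →ₗ[K] (MvPolynomial (Fin s) K ⧸ latticeIdeal K L) :=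
    (AddMonoidAlgebra.basis ((Fin s → ℤ) ⧸ L) K).constr K
      fun g => Ideal.Quotient.mk _ (monomial (rep g) 1)
  have hψ : ψ ∘ₗ (toGrp K L).toLinearMap = (Ideal.Quotient.mkₐ K (latticeIdeal K L)).toLinearMap := by
    refine (basisMonomials (Fin s) K).ext fun a => ?_
    simp only [coe_basisMonomials, LinearMap.comp_apply, AlgHom.toLinearMap_apply,
      toGrp_monomial]
    rw [← AddMonoidAlgebra.basis_apply, Module.Basis.constr_basis]
    change Ideal.Quotient.mk _ _ = Ideal.Quotient.mk _ _
    rw [Ideal.Quotient.eq]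
    apply mono_sub_mem
    have := hrep a
    rw [eq_comm, QuotientAddGroup.eq] at this
    convert this using 1
    ext i
    simp only [Pi.add_apply, Pi.neg_apply]
    omega
  have := LinearMap.congr_fun hψ f
  simp only [LinearMap.comp_apply, AlgHom.toLinearMap_apply, hf, map_zero] at this
  exact Ideal.Quotient.eq_zero_iff_mem.1 this.symm

lemma X_mul_mem {K : Type*} [Field K] {s : ℕ} (L : AddSubgroup (Fin s → ℤ)) (l : Fin s)
    (f : MvPolynomial (Fin s) K) (hf : X l * f ∈ latticeIdeal K L) : f ∈ latticeIdeal K L := by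
  apply mem_latticeIdeal_of_toGrp
  have h := latticeIdeal_le L hf
  rw [RingHom.mem_ker, map_mul] at h
  have hX : toGrp K L (X l) =
    AddMonoidAlgebra.single (QuotientAddGroup.mk (Pi.single l 1)) 1 := by simp [toGrp]
  rw [hX] at h
  have h2 := congrArg (fun z => AddMonoidAlgebra.single
    (-(QuotientAddGroup.mk (Pi.single l 1) : (Fin s → ℤ) ⧸ L)) (1 : K) * z) h
  simpa [← mul_assoc, AddMonoidAlgebra.single_mul_single, ← AddMonoidAlgebra.one_def] using h2

lemma hom_mem_of_monomials {K : Type*} [Field K] {s : ℕ} (d : ℕ)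
    (W : Submodule K (MvPolynomial (Fin s) K))
    (h : ∀ a : Fin s →₀ ℕ, a.degree = d → monomial a (1 : K) ∈ W)
    (f : MvPolynomial (Fin s) K) (hf : f.IsHomogeneous d) : f ∈ W := by
  rw [f.as_sum]
  refine W.sum_mem fun a ha => ?_
  have : monomial a (coeff a f) = coeff a f • monomial a (1 : K) := by
    rw [smul_monomial, smul_eq_mul, mul_one]
  rw [this]
  refine W.smul_mem _ (h a ?_)
  have := hf (mem_support_iff.1 ha)
  rwa [Finsupp.degree_eq_weight_one]

lemma hilbert_zero {K : Type*} [Field K] {s : ℕ} (I : Ideal (MvPolynomial (Fin s) K)) (d : ℕ)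
    (h : ∀ a : Fin s →₀ ℕ, a.degree = d → monomial a (1 : K) ∈ I) : hilbertFunction I d = 0 := by
  rw [hilbertFunction]
  have : Submodule.comap (homogeneousSubmodule (Fin s) K d).subtype
      (Submodule.restrictScalars K I) = ⊤ := by
    rw [eq_top_iff]
    rintro ⟨f, hf⟩ -
    exact hom_mem_of_monomials d (I.restrictScalars K) h f hf
  rw [this]
  exact Module.finrank_zero_of_subsingleton

lemma hilbert_ne_zero {K : Type*} [Field K] {s : ℕ} (I : Ideal (MvPolynomial (Fin s) K))
    (a : Fin s →₀ ℕ) (h : monomial a (1 : K) ∉ I) : hilbertFunction I a.degree ≠ 0 := by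
  intro h0
  rw [hilbertFunction] at h0
  have : Module.Finite K (homogeneousSubmodule (Fin s) K a.degree) :=
    Module.Finite.iff_fg.2 (homogeneousSubmodule_fg _ _ _)
  rw [Module.finrank_zero_iff, Submodule.Quotient.subsingleton_iff] at h0
  have : (⟨monomial a 1, isHomogeneous_monomial 1 rfl⟩ : homogeneousSubmodule (Fin s) K a.degree) ∈
    Submodule.comap (homogeneousSubmodule (Fin s) K a.degree).subtype
      (Submodule.restrictScalars K I) := by rw [h0]; trivial
  exact h this

lemma hilbert_shift {K : Type*} [Field K] {s : ℕ} (I : Ideal (MvPolynomial (Fin s) K)) (l : Fin s)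
    (d : ℕ) (hinj : ∀ f, X l * f ∈ I → f ∈ I)
    (hsurj : ∀ a : Fin s →₀ ℕ, a.degree = d + 1 → ∃ b : Fin s →₀ ℕ, b.degree = d ∧
      monomial a (1 : K) - X l * monomial b 1 ∈ I) :
    hilbertFunction I (d + 1) = hilbertFunction I d := by
  let μ : homogeneousSubmodule (Fin s) K d →ₗ[K] homogeneousSubmodule (Fin s) K (d + 1) :=
    (LinearMap.mulLeft K (X l : MvPolynomial (Fin s) K)).restrict (by
      intro f hf
      rw [add_comm d 1]
      exact (isHomogeneous_X K l).mul hf)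
  have hle : Submodule.comap (homogeneousSubmodule (Fin s) K d).subtype
      (Submodule.restrictScalars K I) ≤ Submodule.comap μ
      (Submodule.comap (homogeneousSubmodule (Fin s) K (d + 1)).subtype
        (Submodule.restrictScalars K I)) := by
    intro f hf
    exact I.mul_mem_left _ hf
  symm
  unfold hilbertFunction
  refine LinearEquiv.finrank_eq (LinearEquiv.ofBijective (Submodule.mapQ _ _ μ hle) ⟨?_, ?_⟩)
  · rw [← LinearMap.ker_eq_bot, eq_bot_iff]
    intro x hx
    obtain ⟨f, rfl⟩ := Submodule.Quotient.mk_surjective _ x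
    rw [LinearMap.mem_ker, Submodule.mapQ_apply, Submodule.Quotient.mk_eq_zero] at hx
    rw [Submodule.mem_bot, Submodule.Quotient.mk_eq_zero]
    exact hinj _ hx
  · intro x
    obtain ⟨f, rfl⟩ := Submodule.Quotient.mk_surjective _ x
    obtain ⟨f, hf⟩ := f
    have key : f ∈ (I.restrictScalars K) ⊔
        (homogeneousSubmodule (Fin s) K d).map (LinearMap.mulLeft K (X l)) := by
      refine hom_mem_of_monomials (d + 1) _ ?_ f hf
      intro a ha
      obtain ⟨b, hb, hm⟩ := hsurj a ha
      rw [← sub_add_cancel (monomial a (1 : K)) (X l * monomial b 1)]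
      exact Submodule.add_mem_sup hm ⟨monomial b 1, isHomogeneous_monomial 1 hb, rfl⟩
    obtain ⟨y, hy, z, ⟨g, hg, rfl⟩, hyz⟩ := Submodule.mem_sup.1 key
    refine ⟨Submodule.Quotient.mk ⟨g, hg⟩, ?_⟩
    rw [Submodule.mapQ_apply, eq_comm, Submodule.Quotient.eq]
    change f - X l * g ∈ I
    have : f - X l * g = y := by rw [← hyz]; simp
    rw [this]; exact hy

lemma exists_mult {m : ℕ} (L : AddSubgroup (Fin (m + 1) → ℤ))
    (hhom : ∀ a ∈ L, ∑ i, a i = 0) (hrank : Module.finrank ℤ L = m) (i l : Fin (m + 1)) :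
    ∃ n : ℕ, 0 < n ∧ (n : ℤ) • (Pi.single i 1 - Pi.single l 1 : Fin (m + 1) → ℤ) ∈ L := by
  set v : Fin (m + 1) → ℤ := Pi.single i 1 - Pi.single l 1 with hv
  have hq := Submodule.finrank_quotient_add_finrank (AddSubgroup.toIntSubmodule L)
  have h1 : Module.finrank ℤ (AddSubgroup.toIntSubmodule L) = m := hrank
  rw [h1, Module.finrank_fin_fun] at hq
  let w : Fin 2 → ((Fin (m + 1) → ℤ) ⧸ AddSubgroup.toIntSubmodule L) :=
    ![Submodule.Quotient.mk v, Submodule.Quotient.mk (Pi.single l 1)]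
  have hdep : ¬ LinearIndependent ℤ w := by
    intro h
    have := h.fintype_card_le_finrank
    simp at this
    omega
  rw [LinearIndependent.pair_iff] at hdep
  push Not at hdep
  obtain ⟨α, β, h0, hne⟩ := hdep
  rw [← Submodule.Quotient.mk_smul, ← Submodule.Quotient.mk_smul, ← Submodule.Quotient.mk_add,
    Submodule.Quotient.mk_eq_zero] at h0
  have hmem : α • v + β • Pi.single l 1 ∈ L := h0
  have hsum := hhom _ hmem
  have hβ : β = 0 := by
    simpa [hv, Finset.sum_add_distrib, ← Finset.mul_sum, Finset.sum_sub_distrib] using hsum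
  have hα : α ≠ 0 := fun h => hne h hβ
  rw [hβ, zero_smul, add_zero] at hmem
  refine ⟨α.natAbs, Int.natAbs_pos.2 hα, ?_⟩
  rcases Int.natAbs_eq α with h | h
  · rwa [← h]
  · have : ((α.natAbs : ℕ) : ℤ) = -α := by omega
    rw [this, neg_smul]
    exact L.neg_mem hmem

lemma pigeon {m : ℕ} (n : Fin m → ℕ) (a : Fin (m + 1) →₀ ℕ)
    (h : (∑ i, (n i - 1)) + 1 ≤ a.degree) :
    a (Fin.last m) ≠ 0 ∨ ∃ i, n i ≤ a (Fin.castSucc i) := by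
  by_contra! hc
  obtain ⟨h1, h2⟩ := hc
  rw [Finsupp.degree_eq_sum, Fin.sum_univ_castSucc, h1] at h
  have : ∑ i, a (Fin.castSucc i) ≤ ∑ i, (n i - 1) :=
    Finset.sum_le_sum fun i _ => by have := h2 i; omega
  omega

lemma index_eq {K : Type*} [Field K] {s : ℕ} (I : Ideal (MvPolynomial (Fin s) K)) (D : ℕ)
    (h0 : ∀ d, D + 1 ≤ d → hilbertFunction I d = 0) (h1 : hilbertFunction I D ≠ 0) :
    indexOfRegularity I = D + 1 := by
  refine le_antisymm (Nat.sInf_le ⟨0, fun d hd => by simp [h0 d hd]⟩) ?_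
  refine le_csInf ⟨D + 1, 0, fun d hd => by simp [h0 d hd]⟩ ?_
  rintro r ⟨p, hp⟩
  by_contra! hr
  have hp0 : p = 0 := by
    apply Polynomial.eq_of_infinite_eval_eq
    refine ((Set.Ici_infinite (D + 1)).image (Nat.cast_injective (R := ℚ)).injOn).mono ?_
    rintro _ ⟨d, hd, rfl⟩
    have hd' : D + 1 ≤ d := hd
    simp [hp d (by omega), h0 d hd']
  have := hp D (by omega)
  rw [hp0] at this
  simp at this
  exact h1 (by exact_mod_cast this.symm)

lemma main_aux (K : Type*) [Field K] {m : ℕ}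
    (L : AddSubgroup (Fin (m + 1) → ℤ))
    (hhom : ∀ a ∈ L, ∑ i, a i = 0)
    (hrank : Module.finrank ℤ L = m) :
    ∃ n : Fin m → ℕ, (∀ i, 0 < n i) ∧
      Ideal.span (Set.range fun i : Fin m =>
          (X (Fin.castSucc i) ^ n i - X (Fin.last m) ^ n i :
              MvPolynomial (Fin (m + 1)) K)) ≤ latticeIdeal K L ∧
      (indexOfRegularity (latticeIdeal K L ⊔
          Ideal.span {(X (Fin.last m) : MvPolynomial (Fin (m + 1)) K)}) ≤
        indexOfRegularity (Ideal.span (Set.range fun i : Fin m =>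
            (X (Fin.castSucc i) ^ n i - X (Fin.last m) ^ n i :
                MvPolynomial (Fin (m + 1)) K)) ⊔
          Ideal.span {(X (Fin.last m) : MvPolynomial (Fin (m + 1)) K)}) ∧
       indexOfRegularity (Ideal.span (Set.range fun i : Fin m =>
            (X (Fin.castSucc i) ^ n i - X (Fin.last m) ^ n i :
                MvPolynomial (Fin (m + 1)) K)) ⊔
          Ideal.span {(X (Fin.last m) : MvPolynomial (Fin (m + 1)) K)}) = (∑ i, (n i - 1)) + 1) ∧
      ∃ c : ℕ, (∃ N : ℕ, ∀ d ≥ N, hilbertFunction (latticeIdeal K L : Ideal (MvPolynomial (Fin (m + 1)) K)) d = c) ∧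
        ∀ d : ℕ, (∑ i, (n i - 1)) + 1 ≤ d →
          hilbertFunction (latticeIdeal K L : Ideal (MvPolynomial (Fin (m + 1)) K)) d = c ∧
          hilbertFunction (latticeIdeal K L : Ideal (MvPolynomial (Fin (m + 1)) K)) (d - 1) = c := by
  choose n hpos hn using fun i : Fin m => exists_mult L hhom hrank (Fin.castSucc i) (Fin.last m)
  have hgen : ∀ i, (X (Fin.castSucc i) ^ n i - X (Fin.last m) ^ n i :
      MvPolynomial (Fin (m + 1)) K) ∈ latticeIdeal K L := by
    intro i
    rw [X_pow_eq_monomial, X_pow_eq_monomial]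
    apply mono_sub_mem
    convert hn i using 1
    ext j
    simp only [Finsupp.single_apply, Pi.smul_apply, Pi.sub_apply, Pi.single_apply, smul_eq_mul,
      eq_comm (a := j)]
    split_ifs <;> simp
  have ha : Ideal.span (Set.range fun i : Fin m =>
          (X (Fin.castSucc i) ^ n i - X (Fin.last m) ^ n i :
              MvPolynomial (Fin (m + 1)) K)) ≤ latticeIdeal K L := by
    rw [Ideal.span_le]
    rintro _ ⟨i, rfl⟩
    exact hgen i
  set L' : Ideal (MvPolynomial (Fin (m + 1)) K) := Ideal.span (Set.range fun i : Fin m =>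
          (X (Fin.castSucc i) ^ n i - X (Fin.last m) ^ n i :
              MvPolynomial (Fin (m + 1)) K)) with hL'
  set T : Ideal (MvPolynomial (Fin (m + 1)) K) := Ideal.span {X (Fin.last m)} with hT
  set D := ∑ i, (n i - 1) with hD
  have hXT : (X (Fin.last m) : MvPolynomial (Fin (m + 1)) K) ∈ L' ⊔ T :=
    (le_sup_right : T ≤ _) (Ideal.subset_span rfl)
  have hXi : ∀ i, (X (Fin.castSucc i) ^ n i : MvPolynomial (Fin (m + 1)) K) ∈ L' ⊔ T := by
    intro i
    rw [← sub_add_cancel (X (Fin.castSucc i) ^ n i : MvPolynomial (Fin (m + 1)) K)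
      (X (Fin.last m) ^ n i)]
    exact Ideal.add_mem _ ((le_sup_left : L' ≤ _) (Ideal.subset_span ⟨i, rfl⟩))
      (Ideal.pow_mem_of_mem _ hXT _ (hpos i))
  have hfac : ∀ (a : Fin (m + 1) →₀ ℕ) (j : Fin (m + 1)) (k : ℕ), k ≤ a j →
      (monomial a (1 : K)) = monomial (a - Finsupp.single j k) 1 * X j ^ k := by
    intro a j k hk
    rw [X_pow_eq_monomial, monomial_mul, one_mul, tsub_add_cancel_of_le]
    simpa using hk
  have hz' : ∀ a : Fin (m + 1) →₀ ℕ, D + 1 ≤ a.degree → monomial a (1 : K) ∈ L' ⊔ T := by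
    intro a hdeg
    rcases pigeon n a hdeg with h | ⟨i, h⟩
    · rw [hfac a (Fin.last m) 1 (by omega), pow_one]
      exact Ideal.mul_mem_left _ _ hXT
    · rw [hfac a _ _ h]
      exact Ideal.mul_mem_left _ _ (hXi i)
  have hreg : indexOfRegularity (L' ⊔ T) = D + 1 := by
    apply index_eq
    · intro d hd
      exact hilbert_zero _ _ fun a had => hz' a (had ▸ hd)
    · let a : Fin (m + 1) →₀ ℕ := Finsupp.equivFunOnFinite.symm
        (Fin.snoc (α := fun _ => ℕ) (fun i => n i - 1) 0)
      have ha1 : ∀ i, a (Fin.castSucc i) = n i - 1 := by intro i; simp [a]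
      have ha2 : a (Fin.last m) = 0 := by simp [a]
      have had : a.degree = D := by
        rw [Finsupp.degree_eq_sum, Fin.sum_univ_castSucc, ha2]
        simp [ha1, hD]
      rw [← had]
      apply hilbert_ne_zero
      intro hmem
      let Sset : Set (Fin (m + 1) →₀ ℕ) :=
        insert (Finsupp.single (Fin.last m) 1)
          (Set.range fun i => Finsupp.single (Fin.castSucc i) (n i))
      have hle : L' ⊔ T ≤ Ideal.span ((fun s => monomial s (1 : K)) '' Sset) := by
        have hX : (X (Fin.last m) : MvPolynomial (Fin (m + 1)) K) ∈
            Ideal.span ((fun s => monomial s (1 : K)) '' Sset) :=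
          Ideal.subset_span ⟨_, Set.mem_insert _ _, rfl⟩
        refine sup_le ?_ ?_
        · rw [hL', Ideal.span_le]
          rintro _ ⟨i, rfl⟩
          refine Ideal.sub_mem _ ?_ (Ideal.pow_mem_of_mem _ hX _ (hpos i))
          rw [X_pow_eq_monomial]
          exact Ideal.subset_span ⟨_, Set.mem_insert_of_mem _ ⟨i, rfl⟩, rfl⟩
        · rw [hT, Ideal.span_singleton_le_iff_mem]
          exact hX
      have h2 := mem_ideal_span_monomial_image.1 (hle hmem) a (by simp [mem_support_iff])
      obtain ⟨b, hb, hba⟩ := h2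
      rcases hb with rfl | ⟨i, rfl⟩
      · have := hba (Fin.last m)
        rw [ha2] at this
        simp at this
      · have := hba (Fin.castSucc i)
        rw [ha1] at this
        have := hpos i
        simp at *
        omega
  have hstep : ∀ d, D ≤ d → hilbertFunction (latticeIdeal K L) (d + 1) =
      hilbertFunction (latticeIdeal K L) d := by
    intro d hd
    refine hilbert_shift _ (Fin.last m) d (fun f => X_mul_mem L _ f) ?_
    have base : ∀ a : Fin (m + 1) →₀ ℕ, a.degree = d + 1 → a (Fin.last m) ≠ 0 →
        ∃ b : Fin (m + 1) →₀ ℕ, b.degree = d ∧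
        monomial a (1 : K) = X (Fin.last m) * monomial b 1 := by
      intro a had h
      have h1 : Finsupp.single (Fin.last m) 1 ≤ a := by simp; omega
      refine ⟨a - Finsupp.single (Fin.last m) 1, ?_, ?_⟩
      · have := congrArg Finsupp.degree (tsub_add_cancel_of_le h1)
        rw [map_add, had, Finsupp.degree_single] at this
        omega
      · rw [mul_comm, hfac a (Fin.last m) 1 (by omega), pow_one]
    intro a had
    rcases pigeon n a (by omega) with h | ⟨i, h⟩
    · obtain ⟨b, hb, he⟩ := base a had h
      exact ⟨b, hb, by rw [he, sub_self]; exact Ideal.zero_mem _⟩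
    · have h1 : Finsupp.single (Fin.castSucc i) (n i) ≤ a := by simpa using h
      have hc := congrArg Finsupp.degree (tsub_add_cancel_of_le h1)
      rw [map_add, had, Finsupp.degree_single] at hc
      obtain ⟨b, hb, he⟩ := base
        (a - Finsupp.single (Fin.castSucc i) (n i) + Finsupp.single (Fin.last m) (n i))
        (by rw [map_add, Finsupp.degree_single]; exact hc)
        (by have := hpos i; simp; omega)
      refine ⟨b, hb, ?_⟩
      rw [← he, hfac a _ _ h]
      have : (monomial (a - Finsupp.single (Fin.castSucc i) (n i) +
          Finsupp.single (Fin.last m) (n i)) (1 : K)) =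
          monomial (a - Finsupp.single (Fin.castSucc i) (n i)) 1 * X (Fin.last m) ^ n i := by
        rw [X_pow_eq_monomial, monomial_mul, one_mul]
      rw [this, ← mul_sub]
      exact Ideal.mul_mem_left _ _ (hgen i)
  have hconst : ∀ d, D ≤ d → hilbertFunction (latticeIdeal K L) d =
      hilbertFunction (latticeIdeal K L) D := by
    intro d hd
    induction d, hd using Nat.le_induction with
    | base => rfl
    | succ d hd ih => rw [hstep d hd, ih]
  refine ⟨n, hpos, ha, ⟨?_, hreg⟩, hilbertFunction (latticeIdeal K L) D, ⟨D, hconst⟩, ?_⟩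
  · rw [hreg]
    refine Nat.sInf_le ⟨0, fun d hd => ?_⟩
    rw [hilbert_zero]
    · simp
    · intro a had
      exact (sup_le_sup_right ha T) (hz' a (had ▸ hd))
  · intro d hd
    exact ⟨hconst d (by omega), hconst (d - 1) (by omega)⟩

/-- Proposition: let `L = I(𝓛) ⊆ S` be a graded lattice ideal of dimension 1 (so `𝓛` is
homogeneous of rank `s-1`).  Then there exist positive integers `n_1, …, n_{s-1}` such that:
(a) the complete intersection ideal `L' = (t_1^{n_1} - t_s^{n_1}, …, t_{s-1}^{n_{s-1}} -
t_s^{n_{s-1}})` is contained in `L`;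
(b) `reg(S/(t_s, L)) ≤ reg(S/(t_s, L')) = ∑ (n_i - 1) + 1`; and
(c) `H_L(d) = H_L(d-1) = deg S/L` for every `d ≥ ∑ (n_i - 1) + 1`, where `deg S/L` is the
eventual constant value `c` of the Hilbert function of `S/L`. -/
theorem lattice_ideal_dim_one_regularity_bound
    (K : Type*) [Field K] {s : ℕ} (hs : 0 < s)
    (𝓛 : AddSubgroup (Fin s → ℤ))
    (hhom : ∀ a ∈ 𝓛, ∑ i, a i = 0)
    (hrank : Module.finrank ℤ 𝓛 = s - 1) :
    ∃ n : Fin (s - 1) → ℕ, (∀ i, 0 < n i) ∧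
      -- (a)
      Ideal.span (Set.range fun i : Fin (s - 1) =>
          (X (Fin.castLE (Nat.sub_le s 1) i) ^ n i -
            X (⟨s - 1, Nat.sub_lt hs Nat.one_pos⟩ : Fin s) ^ n i :
              MvPolynomial (Fin s) K)) ≤ latticeIdeal K 𝓛 ∧
      -- (b)
      (indexOfRegularity (latticeIdeal K 𝓛 ⊔
          Ideal.span {(X (⟨s - 1, Nat.sub_lt hs Nat.one_pos⟩ : Fin s) :
            MvPolynomial (Fin s) K)}) ≤
        indexOfRegularity (Ideal.span (Set.range fun i : Fin (s - 1) =>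
            (X (Fin.castLE (Nat.sub_le s 1) i) ^ n i -
              X (⟨s - 1, Nat.sub_lt hs Nat.one_pos⟩ : Fin s) ^ n i :
                MvPolynomial (Fin s) K)) ⊔
          Ideal.span {(X (⟨s - 1, Nat.sub_lt hs Nat.one_pos⟩ : Fin s) :
            MvPolynomial (Fin s) K)}) ∧
       indexOfRegularity (Ideal.span (Set.range fun i : Fin (s - 1) =>
            (X (Fin.castLE (Nat.sub_le s 1) i) ^ n i -
              X (⟨s - 1, Nat.sub_lt hs Nat.one_pos⟩ : Fin s) ^ n i :
                MvPolynomial (Fin s) K)) ⊔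
          Ideal.span {(X (⟨s - 1, Nat.sub_lt hs Nat.one_pos⟩ : Fin s) :
            MvPolynomial (Fin s) K)}) = (∑ i, (n i - 1)) + 1) ∧
      -- (c)
      ∃ c : ℕ, (∃ N : ℕ, ∀ d ≥ N, hilbertFunction (latticeIdeal K 𝓛 : Ideal (MvPolynomial (Fin s) K)) d = c) ∧
        ∀ d : ℕ, (∑ i, (n i - 1)) + 1 ≤ d →
          hilbertFunction (latticeIdeal K 𝓛 : Ideal (MvPolynomial (Fin s) K)) d = c ∧
          hilbertFunction (latticeIdeal K 𝓛 : Ideal (MvPolynomial (Fin s) K)) (d - 1) = c := by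
  obtain _ | m := s
  · exact absurd hs (lt_irrefl 0)
  · exact main_aux K 𝓛 hhom hrank
end
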